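/- Let H_1, …, H_q be q ≥ 2N+1 hyperplanes in general position in ℙᴺ(ℂ) and let m_1, …, m_q be positive integers or ∞ with Σ_{j=1}^q (1 − N/m_j) > N+1. Then there is no nonconstant holomorphic map f : ℂ → ℙᴺ(ℂ) that intersects each H_j with multiplicity at least m_j (i.e., every zero of the pullback of the defining linear form of H_j under an admissible representation of f has order ≥ m_j, with m_j = ∞ meaning f(ℂ) ⊂ H_j or f(ℂ) ∩ H_j = ∅). -/

import Mathlib

/-! ## Part 1: Nochka weights -/

structure NRank {ι : Type*} [DecidableEq ι] (r : Finset ι → ℕ) (d n : ℕ) : Prop where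
  empty : r ∅ = 0
  mono : ∀ A B : Finset ι, A ⊆ B → r A ≤ r B
  submod : ∀ A B : Finset ι, r (A ∪ B) + r (A ∩ B) ≤ r A + r B
  le_card : ∀ A : Finset ι, r A ≤ A.card
  full : ∀ A : Finset ι, n + 1 ≤ A.card → r A = d

theorem NRank.card_add_le {ι : Type*} [DecidableEq ι] [Fintype ι] {r : Finset ι → ℕ} {d n : ℕ}
    (h : NRank r d n) (hq : n + 1 ≤ Fintype.card ι) (S : Finset ι) (hS : S.card ≤ n + 1) :
    S.card + d ≤ n + 1 + r S := by
  obtain ⟨T, hST, hT⟩ := Finset.exists_superset_card_eq hS hq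
  have h1 := h.full T hT.ge
  have h2 := h.submod S (T \ S)
  have h3 := h.le_card (T \ S)
  rw [Finset.union_sdiff_of_subset hST] at h2
  have h4 := Finset.card_sdiff_add_card_eq_card hST
  omega

theorem nochka_weights {ι : Type*} [DecidableEq ι] [Fintype ι] {r : Finset ι → ℕ} {d n : ℕ}
    (h : NRank r d n) (hd : 1 ≤ d) (hq : n + 1 ≤ Fintype.card ι) :
    ∃ (ω : ι → ℝ) (θ : ℝ), 0 < θ ∧ (∀ j, 0 ≤ ω j) ∧ (∀ j, ω j ≤ θ) ∧
      (∑ j, ω j = θ * ((Fintype.card ι : ℝ) - 2 * n + d - 2) + d) ∧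
      (∀ R : Finset ι, R.card ≤ n + 1 → ∑ j ∈ R, ω j ≤ r R) := by
  classical
  let P : Finset ι → Prop := fun S => r S < d ∧ ∃ ω : ι → ℝ, (∀ j, 0 ≤ ω j) ∧
    (∑ j ∈ S, ω j = r S) ∧ (∀ A ⊆ S, ∑ j ∈ A, ω j ≤ r A) ∧
    (∀ S', S ⊂ S' → r S' < d → ∀ j ∈ S,
      ω j * ((S'.card : ℝ) - S.card) ≤ (r S' : ℝ) - r S) ∧
    (∀ j ∈ S, ω j * ((2 * n - d + 2 : ℝ) - S.card) ≤ (d : ℝ) - r S)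
  have hP0 : P ∅ := by
    refine ⟨by rw [h.empty]; omega, fun _ => 0, by simp, by simp [h.empty], ?_, by simp, by simp⟩
    intro A hA; simp
  have hcard : ∀ S, r S < d → S.card ≤ n := by
    intro S hS
    by_contra hc
    have := h.full S (by omega)
    omega
  obtain ⟨S, hSmem, hSmax⟩ := Finset.exists_max_image (Finset.univ.filter P) Finset.card
    ⟨∅, by simpa using hP0⟩
  obtain ⟨hSd, ω, hω0, hωS, hωA, hω4, hω5⟩ : P S := by simpa using hSmem
  have hScard := h.card_add_le hq S (by have := hcard S hSd; omega)
  have hdn : d ≤ n + 1 := by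
    have := h.card_add_le hq ∅ (by simp)
    rw [h.empty] at this; simpa using this
  have hScardR : (S.card : ℝ) + d ≤ n + 1 + r S := by exact_mod_cast hScard
  have hdnR : (d : ℝ) ≤ n + 1 := by exact_mod_cast hdn
  have hSdR : (r S : ℝ) + 1 ≤ d := by exact_mod_cast hSd
  set D : ℝ := (2 * n - d + 2 : ℝ) - S.card with hD
  have hDge : (n : ℝ) + 1 - r S ≤ D := by rw [hD]; linarith
  have hDpos : 0 < D := by linarith
  set θ : ℝ := ((d : ℝ) - r S) / D with hθ
  have hθD : θ * D = d - r S := by rw [hθ]; field_simp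
  have hθpos : 0 < θ := div_pos (by linarith) hDpos
  have hθ1 : θ ≤ 1 := by rw [hθ, div_le_one hDpos]; linarith
  by_cases hex : ∃ S', S ⊂ S' ∧ r S' < d ∧
      ((r S' : ℝ) - r S) / ((S'.card : ℝ) - S.card) < θ
  · exfalso
    obtain ⟨S0, hS0⟩ := hex
    obtain ⟨S', hS'mem, hS'min⟩ := Finset.exists_min_image
      (Finset.univ.filter (fun S' => S ⊂ S' ∧ r S' < d))
      (fun S' => ((r S' : ℝ) - r S) / ((S'.card : ℝ) - S.card)) ⟨S0, by simp [hS0.1, hS0.2.1]⟩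
    obtain ⟨hSS', hS'd⟩ : S ⊂ S' ∧ r S' < d := by simpa using hS'mem
    set σ : ℝ := ((r S' : ℝ) - r S) / ((S'.card : ℝ) - S.card) with hσ
    have hσθ : σ < θ := lt_of_le_of_lt (hS'min S0 (by simp [hS0.1, hS0.2.1])) hS0.2.2
    have hpos : ∀ T, S ⊂ T → (0 : ℝ) < (T.card : ℝ) - S.card := by
      intro T hT
      have := Finset.card_lt_card hT
      have : (S.card : ℝ) < T.card := by exact_mod_cast this
      linarith
    have hσle : ∀ T, S ⊂ T → r T < d → σ * ((T.card : ℝ) - S.card) ≤ (r T : ℝ) - r S := by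
      intro T hT hTd
      have := hS'min T (by simp [hT, hTd])
      rwa [le_div_iff₀ (hpos T hT)] at this
    have hσeq : σ * ((S'.card : ℝ) - S.card) = (r S' : ℝ) - r S := by
      rw [hσ]; have := hpos S' hSS'; field_simp
    have hσ0 : 0 ≤ σ := by
      refine div_nonneg ?_ (hpos S' hSS').le
      have : (r S : ℝ) ≤ r S' := by exact_mod_cast h.mono S S' hSS'.1
      linarith
    have hωσ : ∀ j ∈ S, ω j ≤ σ := by
      intro j hj
      have := hω4 S' hSS' hS'd j hj
      rw [← hσeq] at this
      exact le_of_mul_le_mul_right this (hpos S' hSS')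
    let ω' : ι → ℝ := fun j => if j ∈ S then ω j else σ
    have hsum : ∀ A : Finset ι, ∑ j ∈ A, ω' j = ∑ j ∈ A ∩ S, ω j + σ * ((A \ S).card : ℝ) := by
      intro A
      rw [← Finset.sum_inter_add_sum_sdiff A S]
      congr 1
      · refine Finset.sum_congr rfl fun j hj => ?_
        simp [ω', (Finset.mem_inter.1 hj).2]
      · rw [Finset.sum_congr rfl (g := fun _ => σ)]
        · simp [mul_comm]
        · intro j hj; simp [ω', (Finset.mem_sdiff.1 hj).2]
    have hω'σ : ∀ j, ω' j ≤ σ := by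
      intro j; by_cases hj : j ∈ S
      · simpa [ω', hj] using hωσ j hj
      · simp [ω', hj]
    have hPS' : P S' := by
      refine ⟨hS'd, ω', ?_, ?_, ?_, ?_, ?_⟩
      · intro j; by_cases hj : j ∈ S <;> simp [ω', hj, hσ0, hω0]
      · rw [hsum, Finset.inter_eq_right.2 hSS'.1, hωS, Finset.cast_card_sdiff hSS'.1, hσeq]; ring
      · intro A hA
        rw [hsum]
        have h1 := hωA (A ∩ S) Finset.inter_subset_right
        have h2 := h.submod A S
        have h2' : (r (A ∪ S) : ℝ) + r (A ∩ S) ≤ r A + r S := by exact_mod_cast h2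
        have h3 : ((A \ S).card : ℝ) = ((A ∪ S).card : ℝ) - S.card := by
          have := Finset.card_union_add_card_inter A S
          have h5 := Finset.card_sdiff_add_card_inter A S
          have : (A \ S).card + S.card = (A ∪ S).card := by omega
          rw [← this]; push_cast; ring
        rcases eq_or_ne (A ∪ S) S with he | he
        · rw [he] at h2'; rw [h3, he]; simp; linarith
        · have hss : S ⊂ A ∪ S := Finset.ssubset_iff_subset_ne.2
            ⟨Finset.subset_union_right, he.symm⟩
          have := hσle (A ∪ S) hss (lt_of_le_of_lt
            (h.mono _ _ (Finset.union_subset hA hSS'.1)) hS'd)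
          rw [h3]; linarith
      · intro T hT hTd j hj
        have h1 := hσle T (hSS'.trans hT) hTd
        have h2 : 0 ≤ (T.card : ℝ) - S'.card := by
          have := Finset.card_lt_card hT
          have : (S'.card : ℝ) < T.card := by exact_mod_cast this
          linarith
        have := mul_le_mul_of_nonneg_right (hω'σ j) h2
        nlinarith
      · intro j hj
        have h4 := h.card_add_le hq S' (by have := hcard S' hS'd; omega)
        have h4R : (S'.card : ℝ) + d ≤ n + 1 + r S' := by exact_mod_cast h4
        have h5 : (r S' : ℝ) + 1 ≤ d := by exact_mod_cast hS'd
        have h2 : 0 ≤ (2 * n - d + 2 : ℝ) - S'.card := by linarith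
        have := mul_le_mul_of_nonneg_right (hω'σ j) h2
        have h6 : σ * D ≤ d - r S := by
          rw [← hθD]; exact mul_le_mul_of_nonneg_right hσθ.le hDpos.le
        nlinarith
    have := hSmax S' (by simpa using hPS')
    have := Finset.card_lt_card hSS'
    omega
  · push Not at hex
    let ω' : ι → ℝ := fun j => if j ∈ S then ω j else θ
    have hsum : ∀ A : Finset ι, ∑ j ∈ A, ω' j = ∑ j ∈ A ∩ S, ω j + θ * ((A \ S).card : ℝ) := by
      intro A
      rw [← Finset.sum_inter_add_sum_sdiff A S]
      congr 1
      · refine Finset.sum_congr rfl fun j hj => ?_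
        simp [ω', (Finset.mem_inter.1 hj).2]
      · rw [Finset.sum_congr rfl (g := fun _ => θ)]
        · simp [mul_comm]
        · intro j hj; simp [ω', (Finset.mem_sdiff.1 hj).2]
    refine ⟨ω', θ, hθpos, ?_, ?_, ?_, ?_⟩
    · intro j; by_cases hj : j ∈ S <;> simp [ω', hj, hθpos.le, hω0]
    · intro j; by_cases hj : j ∈ S
      · simp only [ω', hj, if_true]
        rw [hθ, le_div_iff₀ hDpos]
        exact hω5 j hj
      · simp [ω', hj]
    · rw [hsum, Finset.univ_inter, hωS, Finset.cast_card_sdiff (Finset.subset_univ S),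
        Finset.card_univ]
      have : (r S : ℝ) = d - θ * D := by linarith
      rw [this, hD]; ring
    · intro R hR
      rw [hsum]
      have h1 := hωA (R ∩ S) Finset.inter_subset_right
      have h2 : (r (R ∪ S) : ℝ) + r (R ∩ S) ≤ r R + r S := by exact_mod_cast h.submod R S
      have h3 : (R \ S).card + (R ∩ S).card = R.card := Finset.card_sdiff_add_card_inter R S
      have h3R : ((R \ S).card : ℝ) + (R ∩ S).card = R.card := by exact_mod_cast h3
      have h3' : ((R \ S).card : ℝ) = ((R ∪ S).card : ℝ) - S.card := by
        have := Finset.card_union_add_card_inter R S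
        have : (R \ S).card + S.card = (R ∪ S).card := by omega
        rw [← this]; push_cast; ring
      by_cases hfull : r (R ∪ S) < d
      · rcases eq_or_ne (R ∪ S) S with he | he
        · rw [he] at h2; rw [h3', he]; simp; linarith
        · have hss : S ⊂ R ∪ S := Finset.ssubset_iff_subset_ne.2
            ⟨Finset.subset_union_right, he.symm⟩
          have h4 := hex (R ∪ S) hss hfull
          have h5 : (0 : ℝ) < ((R ∪ S).card : ℝ) - S.card := by
            have := Finset.card_lt_card hss
            have : (S.card : ℝ) < (R ∪ S).card := by exact_mod_cast this
            linarith
          rw [le_div_iff₀ h5] at h4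
          rw [h3']; linarith
      · have h4 : (R.card : ℝ) + d ≤ n + 1 + r R := by exact_mod_cast h.card_add_le hq R hR
        have h5 : (d : ℝ) ≤ r (R ∪ S) := by exact_mod_cast (not_lt.1 hfull)
        have h6 : (r (R ∩ S) : ℝ) ≤ (R ∩ S).card := by exact_mod_cast h.le_card _
        have h7 : θ * ((n : ℝ) + 1 - r S) ≤ d - r S := by
          rw [← hθD]; exact mul_le_mul_of_nonneg_left hDge hθpos.le
        have h8 : ((R \ S).card : ℝ) ≤ n + 1 - d + r R - r (R ∩ S) := by linarith
        have h9 := mul_le_mul_of_nonneg_left h8 hθpos.le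
        have h10 : 0 ≤ (1 - θ) * ((r R : ℝ) - (d - r S + r (R ∩ S))) :=
          mul_nonneg (by linarith) (by linarith)
        nlinarith

theorem nochka_basis {ι : Type*} [DecidableEq ι] [Fintype ι] {r : Finset ι → ℕ} {d n : ℕ}
    (h : NRank r d n) (ω : ι → ℝ)
    (hω : ∀ R : Finset ι, R.card ≤ n + 1 → ∑ j ∈ R, ω j ≤ r R) :
    ∀ (m : ℕ) (R : Finset ι), R.card = m → m ≤ n + 1 → ∀ x : ι → ℝ, (∀ j ∈ R, 0 ≤ x j) →
      ∃ B ⊆ R, B.card = r R ∧ r B = B.card ∧ ∑ j ∈ R, ω j * x j ≤ ∑ j ∈ B, x j := by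
  intro m
  induction m with
  | zero =>
    intro R hR _ x hx
    have : R = ∅ := Finset.card_eq_zero.1 hR
    subst this
    exact ⟨∅, by simp, by simp [h.empty], by simp [h.empty], by simp⟩
  | succ m ih =>
    intro R hR hm x hx
    obtain ⟨j0, hj0, hmin⟩ := Finset.exists_min_image R x (Finset.card_pos.1 (by omega))
    have hc : (R.erase j0).card = m := by rw [Finset.card_erase_of_mem hj0]; omega
    obtain ⟨B', hB'R, hB'c, hB'r, hB'⟩ := ih (R.erase j0) hc (by omega) (fun j => x j - x j0)
      (fun j hj => by have := hmin j (Finset.mem_of_mem_erase hj); linarith)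
    have hx0 : 0 ≤ x j0 := hx j0 hj0
    have hj0B : j0 ∉ B' := fun hh => by simpa using hB'R hh
    have hB'R' : B' ⊆ R := hB'R.trans (Finset.erase_subset _ _)
    obtain ⟨B, hB'B, hBR, hBc, hBr⟩ : ∃ B, B' ⊆ B ∧ B ⊆ R ∧ B.card = r R ∧ r B = B.card := by
      have hm1 := h.mono (R.erase j0) R (Finset.erase_subset _ _)
      rcases hm1.eq_or_lt with he | hlt
      · exact ⟨B', subset_rfl, hB'R', by omega, hB'r⟩
      · refine ⟨insert j0 B', Finset.subset_insert _ _, ?_, ?_⟩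
        · intro j hj
          rcases Finset.mem_insert.1 hj with rfl | hj
          · exact hj0
          · exact hB'R' hj
        · have h1 := h.submod (R.erase j0) (insert j0 B')
          have h2 : R.erase j0 ∪ insert j0 B' = R := by
            ext j
            simp only [Finset.mem_union, Finset.mem_erase, Finset.mem_insert]
            constructor
            · rintro (⟨_, hh⟩ | rfl | hh)
              · exact hh
              · exact hj0
              · exact hB'R' hh
            · intro hh; by_cases hj : j = j0 <;> simp [hj, hh]
          have h3 : R.erase j0 ∩ insert j0 B' = B' := by
            ext j
            simp only [Finset.mem_inter, Finset.mem_erase, Finset.mem_insert]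
            constructor
            · rintro ⟨⟨h1, _⟩, h2⟩
              exact h2.resolve_left h1
            · intro hh
              exact ⟨⟨fun h4 => hj0B (h4 ▸ hh), hB'R' hh⟩, Or.inr hh⟩
          rw [h2, h3] at h1
          have h4 := h.le_card (insert j0 B')
          have h5 := h.submod (R.erase j0) {j0}
          have h6 := h.le_card {j0}
          have h7 : R.erase j0 ∪ {j0} = R := by
            rw [Finset.union_comm, ← Finset.insert_eq, Finset.insert_erase hj0]
          rw [h7] at h5
          rw [Finset.card_singleton] at h6
          rw [Finset.card_insert_of_notMem hj0B] at h4 ⊢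
          omega
    refine ⟨B, hBR, hBc, hBr, ?_⟩
    have h1 : ∑ j ∈ R, ω j * x j = ∑ j ∈ R, ω j * (x j - x j0) + x j0 * ∑ j ∈ R, ω j := by
      rw [Finset.mul_sum, ← Finset.sum_add_distrib]
      refine Finset.sum_congr rfl fun j _ => by ring
    have h2 : ∑ j ∈ R, ω j * (x j - x j0) = ∑ j ∈ R.erase j0, ω j * (x j - x j0) := by
      rw [← Finset.sum_erase_add R _ hj0]; simp
    have h3 : x j0 * ∑ j ∈ R, ω j ≤ x j0 * r R :=
      mul_le_mul_of_nonneg_left (hω R (by omega)) hx0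
    have h4 : ∑ j ∈ B', (x j - x j0) ≤ ∑ j ∈ B, (x j - x j0) :=
      Finset.sum_le_sum_of_subset_of_nonneg hB'B
        (fun j hj _ => by have := hmin j (hBR hj); linarith)
    have h5 : ∑ j ∈ B, (x j - x j0) = ∑ j ∈ B, x j - x j0 * r R := by
      rw [Finset.sum_sub_distrib, Finset.sum_const, hBc]; simp [mul_comm]
    linarith

/-! ## Part 2: linear algebra -/

theorem nrank_span {ι : Type*} [DecidableEq ι] {d n : ℕ} (b : ι → Fin d → ℂ)
    (hspan : ∀ A : Finset ι, A.card = n + 1 → Submodule.span ℂ (b '' (A : Set ι)) = ⊤) :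
    NRank (fun S : Finset ι => Module.finrank ℂ (Submodule.span ℂ (b '' (S : Set ι)))) d n := by
  refine ⟨by simp, ?_, ?_, ?_, ?_⟩
  · intro A B hAB
    exact Submodule.finrank_mono (Submodule.span_mono (Set.image_mono (by exact_mod_cast hAB)))
  · intro A B
    have h1 := Submodule.finrank_sup_add_finrank_inf_eq (Submodule.span ℂ (b '' (A : Set ι)))
      (Submodule.span ℂ (b '' (B : Set ι)))
    have h2 : Submodule.span ℂ (b '' ((A ∩ B : Finset ι) : Set ι)) ≤
        Submodule.span ℂ (b '' (A : Set ι)) ⊓ Submodule.span ℂ (b '' (B : Set ι)) := by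
      refine le_inf (Submodule.span_mono (Set.image_mono ?_))
        (Submodule.span_mono (Set.image_mono ?_))
      · exact_mod_cast Finset.inter_subset_left
      · exact_mod_cast Finset.inter_subset_right
    have h3 := Submodule.finrank_mono h2
    have h4 : Submodule.span ℂ (b '' ((A ∪ B : Finset ι) : Set ι)) =
        Submodule.span ℂ (b '' (A : Set ι)) ⊔ Submodule.span ℂ (b '' (B : Set ι)) := by
      rw [Finset.coe_union, Set.image_union, Submodule.span_union]
    show Module.finrank ℂ (Submodule.span ℂ (b '' ((A ∪ B : Finset ι) : Set ι))) +
      Module.finrank ℂ (Submodule.span ℂ (b '' ((A ∩ B : Finset ι) : Set ι))) ≤ _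
    rw [h4]
    omega
  · intro A
    have h1 := finrank_span_finset_le_card (R := ℂ) (A.image b)
    have h2 := Finset.card_image_le (s := A) (f := b)
    rw [Set.finrank, Finset.coe_image] at h1
    exact h1.trans h2
  · intro A hA
    obtain ⟨B, hBA, hB⟩ := Finset.exists_subset_card_eq hA
    have h1 := hspan B hB
    have h2 : Submodule.span ℂ (b '' (A : Set ι)) = ⊤ := by
      rw [eq_top_iff, ← h1]
      exact Submodule.span_mono (Set.image_mono (by exact_mod_cast hBA))
    show Module.finrank ℂ (Submodule.span ℂ (b '' (A : Set ι))) = d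
    rw [h2]; simp

theorem nochka_final {ι : Type*} [DecidableEq ι] [Fintype ι] {d n : ℕ} (b : ι → Fin d → ℂ)
    (hspan : ∀ A : Finset ι, A.card = n + 1 → Submodule.span ℂ (b '' (A : Set ι)) = ⊤)
    (hd : 1 ≤ d) (hq : n + 1 ≤ Fintype.card ι) :
    ∃ (ω : ι → ℝ) (θ : ℝ), 0 < θ ∧ (∀ j, 0 ≤ ω j) ∧ (∀ j, ω j ≤ θ) ∧
      (∑ j, ω j = θ * ((Fintype.card ι : ℝ) - 2 * n + d - 2) + d) ∧
      (∀ R : Finset ι, R.card = n + 1 → ∀ x : ι → ℝ, (∀ j ∈ R, 0 ≤ x j) →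
        ∃ e : Fin d → ι, (∀ i, e i ∈ R) ∧ (Matrix.of fun i => b (e i)).det ≠ 0 ∧
          ∑ j ∈ R, ω j * x j ≤ ∑ i, x (e i)) := by
  have h := nrank_span b hspan
  obtain ⟨ω, θ, h1, h2, h3, h4, h5⟩ := nochka_weights h hd hq
  refine ⟨ω, θ, h1, h2, h3, h4, ?_⟩
  intro R hR x hx
  obtain ⟨B, hBR, hBc, hBr, hB⟩ := nochka_basis h ω h5 (n + 1) R hR le_rfl x hx
  rw [h.full R hR.ge] at hBc
  let e := (B.equivFinOfCardEq hBc).symm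
  refine ⟨fun i => (e i : ι), fun i => hBR (e i).2, ?_, ?_⟩
  · have hli : LinearIndependent ℂ (fun i => b (e i : ι)) := by
      apply linearIndependent_of_top_le_span_of_card_eq_finrank
      · have hr : Set.range (fun i => b (e i : ι)) = b '' (B : Set ι) := by
          ext v; constructor
          · rintro ⟨i, rfl⟩; exact ⟨e i, (e i).2, rfl⟩
          · rintro ⟨j, hj, rfl⟩; exact ⟨e.symm ⟨j, hj⟩, by simp⟩
        rw [hr]
        apply le_of_eq
        symm
        apply Submodule.eq_top_of_finrank_eq
        have : Module.finrank ℂ (Submodule.span ℂ (b '' (B : Set ι))) = B.card := hBr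
        rw [this, hBc]; simp
      · simp
    have := (Matrix.linearIndependent_rows_iff_isUnit (A := Matrix.of fun i => b (e i : ι))).1 hli
    exact ((Matrix.isUnit_iff_isUnit_det _).1 this).ne_zero
  · refine hB.trans (le_of_eq ?_)
    rw [Equiv.sum_comp e (fun j => x (j : ι)), Finset.sum_coe_sort B x]

theorem exists_delta {ι : Type*} [DecidableEq ι] [Fintype ι] {d n : ℕ} (b : ι → Fin d → ℂ)
    (hspan : ∀ A : Finset ι, A.card = n + 1 → Submodule.span ℂ (b '' (A : Set ι)) = ⊤) :
    ∃ δ : ℝ, 0 < δ ∧ ∀ A : Finset ι, A.card = n + 1 → ∀ v : Fin d → ℂ,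
      ∃ j ∈ A, δ * ‖v‖ ≤ ‖∑ i, b j i * v i‖ := by
  have key : ∀ A : Finset ι, ∃ δ : ℝ, 0 < δ ∧ (A.card = n + 1 → ∀ v : Fin d → ℂ,
      ∃ j ∈ A, δ * ‖v‖ ≤ ‖∑ i, b j i * v i‖) := by
    intro A
    by_cases hA : A.card = n + 1
    swap
    · exact ⟨1, one_pos, fun h => absurd h hA⟩
    let L : (Fin d → ℂ) →ₗ[ℂ] (A → ℂ) :=
      { toFun := fun v j => ∑ i, b j i * v i
        map_add' := by intro v w; ext j; simp [mul_add, Finset.sum_add_distrib]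
        map_smul' := by
          intro c v; ext j
          simp only [Pi.smul_apply, smul_eq_mul, RingHom.id_apply, Finset.mul_sum]
          refine Finset.sum_congr rfl fun i _ => by ring }
    have hker : LinearMap.ker L = ⊥ := by
      rw [LinearMap.ker_eq_bot']
      intro v hv
      have h1 : ∀ w ∈ Submodule.span ℂ (b '' (A : Set ι)), ∑ i, w i * v i = 0 := by
        intro w hw
        induction hw using Submodule.span_induction with
        | mem x hx =>
          obtain ⟨j, hj, rfl⟩ := hx
          exact congrFun hv ⟨j, hj⟩
        | zero => simp
        | add x y _ _ hx hy => simp [add_mul, Finset.sum_add_distrib, hx, hy]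
        | smul c x _ hx => simp [mul_assoc, ← Finset.mul_sum, hx]
      rw [hspan A hA] at h1
      ext i
      have := h1 (Pi.single i 1) trivial
      simpa [Pi.single_apply] using this
    obtain ⟨K, hK0, hK⟩ := L.exists_antilipschitzWith hker
    have hK0' : (0 : ℝ) < K := hK0
    refine ⟨(K : ℝ)⁻¹, inv_pos.2 hK0', fun _ v => ?_⟩
    have h2 := hK.le_mul_dist v 0
    simp only [dist_zero_right, map_zero] at h2
    have hne : Nonempty A := by
      have : 0 < A.card := by omega
      obtain ⟨j, hj⟩ := Finset.card_pos.1 this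
      exact ⟨⟨j, hj⟩⟩
    obtain ⟨j, hj⟩ := Finite.exists_max (fun j => ‖L v j‖)
    refine ⟨j, j.2, ?_⟩
    have h3 : ‖L v‖ ≤ ‖L v j‖ := (pi_norm_le_iff_of_nonneg (norm_nonneg _)).2 hj
    have h4 : (K : ℝ)⁻¹ * ‖v‖ ≤ ‖L v‖ := by
      rw [inv_mul_le_iff₀ hK0']; exact h2
    exact h4.trans h3
  choose δ hδ0 hδ using key
  obtain ⟨A0, -, hA0⟩ := Finset.exists_min_image (Finset.univ : Finset (Finset ι)) δ
    ⟨∅, Finset.mem_univ _⟩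
  refine ⟨δ A0, hδ0 A0, fun A hA v => ?_⟩
  obtain ⟨j, hj, hle⟩ := hδ A hA v
  exact ⟨j, hj, (mul_le_mul_of_nonneg_right (hA0 A (Finset.mem_univ _)) (norm_nonneg _)).trans hle⟩

/-! ## Part 3: factorization of zeros in a disc -/

theorem factor_bound {g : ℂ → ℂ} (hg : Differentiable ℂ g) (hg0 : g 0 ≠ 0) {R : ℝ} (hR : 0 < R) :
    ∃ B : ℕ, ∀ (n : ℕ) (a : Fin n → ℂ) (h : ℂ → ℂ), (∀ i, ‖a i‖ ≤ R) → Differentiable ℂ h →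
      (∀ z, g z = (∏ i, (z - a i)) * h z) → n ≤ B := by
  obtain ⟨M, hM⟩ := (isCompact_sphere (0 : ℂ) (3 * R)).exists_bound_of_continuousOn
    hg.continuous.continuousOn
  obtain ⟨B, hB⟩ := pow_unbounded_of_one_lt (M / ‖g 0‖) (one_lt_two (α := ℝ))
  refine ⟨B, fun n a h ha hh hgh => ?_⟩
  by_contra hn
  push Not at hn
  have hg0' : 0 < ‖g 0‖ := norm_pos_iff.2 hg0
  -- bound on the big circle
  have h1 : ∀ z ∈ Metric.sphere (0 : ℂ) (3 * R), ‖h z‖ ≤ M / (2 * R) ^ n := by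
    intro z hz
    have hz' : ‖z‖ = 3 * R := by simpa using hz
    have h2 : (2 * R) ^ n ≤ ‖∏ i, (z - a i)‖ := by
      rw [norm_prod]
      calc (2 * R) ^ n = ∏ _i : Fin n, (2 * R) := by simp
        _ ≤ _ := by
          apply Finset.prod_le_prod
          · intro i _; positivity
          · intro i _
            have := norm_sub_norm_le z (a i)
            have := ha i
            linarith
    rw [le_div_iff₀ (by positivity)]
    calc ‖h z‖ * (2 * R) ^ n ≤ ‖h z‖ * ‖∏ i, (z - a i)‖ := by gcongr
      _ = ‖g z‖ := by rw [hgh z, norm_mul, mul_comm]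
      _ ≤ M := hM z hz
  have h3 : ‖h 0‖ ≤ M / (2 * R) ^ n := by
    apply Complex.norm_le_of_forall_mem_frontier_norm_le (U := Metric.ball (0 : ℂ) (3 * R))
      Metric.isBounded_ball hh.diffContOnCl
    · intro z hz
      rw [frontier_ball _ (by positivity)] at hz
      exact h1 z hz
    · exact subset_closure (by simp [hR])
  have h4 : ‖∏ i, ((0 : ℂ) - a i)‖ ≤ R ^ n := by
    rw [norm_prod]
    calc _ ≤ ∏ _i : Fin n, R := by
          apply Finset.prod_le_prod
          · intro i _; positivity
          · intro i _; simpa using ha i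
      _ = R ^ n := by simp
  have h5 : ‖g 0‖ ≤ R ^ n * (M / (2 * R) ^ n) := by
    rw [hgh 0, norm_mul]
    gcongr
  have h6 : R ^ n * (M / (2 * R) ^ n) = M / 2 ^ n := by
    rw [mul_pow]; field_simp
  rw [h6, le_div_iff₀ (by positivity)] at h5
  have h7 : (2 : ℝ) ^ B ≤ 2 ^ n := pow_le_pow_right₀ (by norm_num) hn.le
  rw [div_lt_iff₀ hg0'] at hB
  nlinarith

theorem exists_factor {g : ℂ → ℂ} (hg : Differentiable ℂ g) (hg0 : g 0 ≠ 0) {R : ℝ} (hR : 0 < R) :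
    ∃ (n : ℕ) (a : Fin n → ℂ) (h : ℂ → ℂ), (∀ i, ‖a i‖ ≤ R) ∧ Differentiable ℂ h ∧
      (∀ z, g z = (∏ i, (z - a i)) * h z) ∧ ∀ z, ‖z‖ ≤ R → h z ≠ 0 := by
  obtain ⟨B, hB⟩ := factor_bound hg hg0 hR
  classical
  let P : ℕ → Prop := fun n => ∃ (a : Fin n → ℂ) (h : ℂ → ℂ), (∀ i, ‖a i‖ ≤ R) ∧
    Differentiable ℂ h ∧ (∀ z, g z = (∏ i, (z - a i)) * h z)
  have hP0 : P 0 := ⟨Fin.elim0, g, fun i => i.elim0, hg, fun z => by simp⟩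
  have hPB : ∀ n, P n → n ≤ B := by
    rintro n ⟨a, h, h1, h2, h3⟩; exact hB n a h h1 h2 h3
  have hmax := Nat.findGreatest_spec (P := P) (Nat.zero_le B) hP0
  set n := Nat.findGreatest P B with hn
  obtain ⟨a, h, h1, h2, h3⟩ := hmax
  refine ⟨n, a, h, h1, h2, h3, ?_⟩
  intro w hw hw0
  have hPn : P (n + 1) := by
    refine ⟨Fin.cons w a, dslope h w, ?_, ?_, ?_⟩
    · intro i
      refine Fin.cases ?_ ?_ i
      · simpa using hw
      · intro i; simpa using h1 i
    · have := (Complex.differentiableOn_dslope (s := Set.univ) (c := w) (f := h)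
        Filter.univ_mem).2 h2.differentiableOn
      exact differentiableOn_univ.1 this
    · intro z
      rw [h3 z, Fin.prod_univ_succ]
      have h4 := sub_smul_dslope h w z
      rw [hw0, sub_zero, smul_eq_mul] at h4
      simp only [Fin.cons_zero, Fin.cons_succ]
      rw [← h4]; ring
  have := Nat.le_findGreatest (P := P) (hPB _ hPn) hPn
  omega

/-! ## Part 4: circle averages -/

open Real in
theorem intervalIntegrable_sin_half (A B : ℝ) :
    IntervalIntegrable (fun x : ℝ => (√|sin x|)⁻¹) MeasureTheory.volume A B := by
  have hmeas : Measurable (fun x : ℝ => (√|sin x|)⁻¹) := by fun_prop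
  have h1 : IntervalIntegrable (fun x : ℝ => (√|sin x|)⁻¹) MeasureTheory.volume 0 (π / 2) := by
    have h2 : IntervalIntegrable (fun x : ℝ => 2 * x ^ (-(1 / 2) : ℝ)) MeasureTheory.volume 0 (π / 2) :=
      (intervalIntegral.intervalIntegrable_rpow' (by norm_num)).const_mul 2
    refine h2.mono_fun' hmeas.aestronglyMeasurable ?_
    refine (MeasureTheory.ae_restrict_iff' measurableSet_uIoc).2 (Filter.Eventually.of_forall ?_)
    intro x hx
    rw [Set.uIoc_of_le (by positivity)] at hx
    obtain ⟨hx0, hx1⟩ := hx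
    have h3 := Real.mul_le_sin hx0.le hx1
    have h4 : x / 4 ≤ |sin x| := by
      refine le_trans ?_ (le_abs_self _)
      refine le_trans ?_ h3
      have : (1 : ℝ) / 4 ≤ 2 / π := by
        rw [div_le_div_iff₀ (by norm_num) pi_pos]; nlinarith [pi_le_four]
      nlinarith
    have h5 : √x / 2 ≤ √|sin x| := by
      calc √x / 2 = √(x / 4) := by
            rw [show x / 4 = x / 2 ^ 2 by norm_num, Real.sqrt_div' _ (by positivity)]
            rw [Real.sqrt_sq (by norm_num)]
        _ ≤ _ := Real.sqrt_le_sqrt h4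
    show ‖(√|sin x|)⁻¹‖ ≤ 2 * x ^ (-(1 / 2) : ℝ)
    rw [Real.norm_of_nonneg (by positivity), Real.rpow_neg hx0.le, ← Real.sqrt_eq_rpow]
    have h6 : 0 < √x := Real.sqrt_pos.2 hx0
    calc (√|sin x|)⁻¹ ≤ (√x / 2)⁻¹ := inv_anti₀ (by positivity) h5
      _ = 2 * (√x)⁻¹ := by field_simp
  have h2 : IntervalIntegrable (fun x : ℝ => (√|sin x|)⁻¹) MeasureTheory.volume (π / 2) π := by
    have := (h1.comp_sub_left π).symm
    simp only [sin_pi_sub] at this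
    convert this using 1 <;> ring
  have h3 := h1.trans h2
  have hper : Function.Periodic (fun x : ℝ => (√|sin x|)⁻¹) π := by
    intro x; simp [sin_add_pi]
  exact hper.intervalIntegrable (t := 0) pi_ne_zero (by simpa using h3) A B

open Real in
/-- The constant bounding circle averages of `‖z - a‖^(-1/2)`. -/
noncomputable def sinC : ℝ := (2 * π)⁻¹ * ∫ x in (0 : ℝ)..(2 * π), (√|sin x|)⁻¹

open Real in
theorem norm_circleMap_sub_ge (a : ℂ) (x : ℝ) :
    |sin (x - Complex.arg a)| ≤ ‖circleMap 0 1 x - a‖ := by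
  have h1 : circleMap 0 1 x - a =
      Complex.exp (Complex.arg a * Complex.I) *
        (Complex.exp ((x - Complex.arg a : ℝ) * Complex.I) - ‖a‖) := by
    conv_lhs => rw [← Complex.norm_mul_exp_arg_mul_I a]
    rw [mul_sub, ← Complex.exp_add]
    simp only [circleMap]
    push_cast
    ring_nf
  rw [h1, norm_mul, Complex.norm_exp_ofReal_mul_I, one_mul]
  refine le_trans (le_of_eq ?_) (Complex.abs_im_le_norm _)
  rw [Complex.sub_im, Complex.exp_ofReal_mul_I_im]
  simp

open Real in
theorem ae_sin_ne (α : ℝ) : ∀ᵐ x : ℝ, sin (x - α) ≠ 0 := by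
  have : {x : ℝ | ¬ sin (x - α) ≠ 0} ⊆ Set.range (fun n : ℤ => (n : ℝ) * π + α) := by
    intro x hx
    simp only [ne_eq, not_not, Set.mem_ofPred_eq] at hx
    obtain ⟨n, hn⟩ := Real.sin_eq_zero_iff.1 hx
    exact ⟨n, by simp only; linarith⟩
  exact ((Set.countable_range _).mono this).measure_zero _

open Real in
theorem circle_half (a : ℂ) : CircleIntegrable (fun z => (√‖z - a‖)⁻¹) 0 1 ∧
    circleAverage (fun z => (√‖z - a‖)⁻¹) 0 1 ≤ sinC := by
  have h1 : IntervalIntegrable (fun x : ℝ => (√|sin (x - Complex.arg a)|)⁻¹)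
      MeasureTheory.volume 0 (2 * π) := by
    have := (intervalIntegrable_sin_half (0 - Complex.arg a) (2 * π - Complex.arg a)).comp_sub_right
      (Complex.arg a)
    simpa using this
  have hae : ∀ᵐ x : ℝ, (√‖circleMap 0 1 x - a‖)⁻¹ ≤ (√|sin (x - Complex.arg a)|)⁻¹ := by
    filter_upwards [ae_sin_ne (Complex.arg a)] with x hx
    exact inv_anti₀ (Real.sqrt_pos.2 (abs_pos.2 hx)) (Real.sqrt_le_sqrt (norm_circleMap_sub_ge a x))
  have h2 : CircleIntegrable (fun z => (√‖z - a‖)⁻¹) 0 1 := by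
    refine h1.mono_fun' ?_ ?_
    · have : Measurable (fun x : ℝ => (√‖circleMap 0 1 x - a‖)⁻¹) := by
        have := (continuous_circleMap 0 1).measurable
        fun_prop
      exact this.aestronglyMeasurable
    · filter_upwards [MeasureTheory.ae_restrict_of_ae hae] with x hx
      rw [Real.norm_of_nonneg (by positivity)]
      exact hx
  refine ⟨h2, ?_⟩
  rw [circleAverage_def, sinC, smul_eq_mul]
  have h3 : ∫ x in (0 : ℝ)..(2 * π), (√|sin (x - Complex.arg a)|)⁻¹ =
      ∫ x in (0 : ℝ)..(2 * π), (√|sin x|)⁻¹ := by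
    rw [intervalIntegral.integral_comp_sub_right (fun x => (√|sin x|)⁻¹)]
    have hper : Function.Periodic (fun x : ℝ => (√|sin x|)⁻¹) (2 * π) := by
      intro x; simp
    have := hper.intervalIntegral_add_eq (0 - Complex.arg a) 0
    simp only [zero_add] at this
    rw [← this]; congr 1; ring
  rw [← h3]
  gcongr
  exact intervalIntegral.integral_mono_ae (by positivity) h2 h1 hae

theorem sinC_nonneg : 0 ≤ sinC := by
  unfold sinC
  have : 0 ≤ ∫ x in (0 : ℝ)..(2 * Real.pi), (√|Real.sin x|)⁻¹ :=
    intervalIntegral.integral_nonneg (by positivity) (fun x _ => by positivity)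
  positivity

open Real in
theorem circle_abs_log {ρ : ℝ} (h1 : 1 ≤ ρ) (h2 : ρ ≤ 2) {a : ℂ} (ha : ‖a‖ ≤ ρ) :
    circleAverage (fun z => |log ‖z - a‖|) 0 ρ ≤ 4 := by
  have hi := circleIntegrable_log_norm_sub_const (a := a) (c := 0) ρ
  have h3 := circleAverage_log_norm_sub_const_of_mem_closedBall (a := a) (c := 0) (R := ρ)
    (by simp; exact ha.trans (le_abs_self _))
  have h4 : circleAverage (fun z => |log ‖z - a‖|) 0 ρ ≤
      circleAverage (fun z => 2 * log 4 - log ‖z - a‖) 0 ρ := by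
    apply circleAverage_mono hi.abs ((circleIntegrable_const _ _ _).sub hi)
    intro z hz
    have hz' : ‖z‖ = ρ := by simpa [abs_of_nonneg (zero_le_one.trans h1)] using hz
    have h5 : ‖z - a‖ ≤ 4 := by
      have := norm_sub_le z a; linarith
    have hl4 : 0 ≤ log 4 := log_nonneg (by norm_num)
    show |log ‖z - a‖| ≤ 2 * log 4 - log ‖z - a‖
    rcases (norm_nonneg (z - a)).eq_or_lt with h0 | h0
    · rw [← h0]; simp; positivity
    · have := log_le_log h0 h5
      rw [abs_le]; constructor <;> linarith
  rw [circleAverage_fun_sub (circleIntegrable_const _ _ _) hi, circleAverage_const, h3] at h4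
  have h6 : log 4 = 2 * log 2 := by
    rw [show (4 : ℝ) = 2 ^ 2 by norm_num, log_pow]; norm_num
  have := log_two_lt_d9
  have := log_nonneg h1
  linarith

open Real in
theorem poisson_lip {ρ M : ℝ} (h1 : 1 < ρ) (h2 : ρ ≤ 2) {u : ℂ → ℝ}
    (hu : InnerProductSpace.HarmonicOnNhd u (Metric.closedBall 0 ρ))
    (hM : circleAverage (fun z => |u z|) 0 ρ ≤ M) {z w : ℂ} (hz : ‖z‖ = 1)
    (hw : ‖w‖ ≤ (1 + ρ) / 2) : |u w - u z| ≤ 8 * M / (ρ - 1) ^ 2 * ‖w - z‖ := by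
  have hρ : 0 < ρ := by linarith
  have hzb : z ∈ Metric.ball (0 : ℂ) ρ := by simp [hz, h1]
  have hwb : w ∈ Metric.ball (0 : ℂ) ρ := by simp; linarith
  have e1 := hu.circleAverage_poissonKernel_smul hzb
  have e2 := hu.circleAverage_poissonKernel_smul hwb
  have hρ' : |ρ| = ρ := abs_of_pos hρ
  have hucont : ContinuousOn u (Metric.sphere 0 |ρ|) := by
    rw [hρ']
    intro x hx
    exact (hu x (Metric.sphere_subset_closedBall hx)).1.continuousAt.continuousWithinAt
  have hui : CircleIntegrable u 0 ρ := hucont.circleIntegrable'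
  have hpk : ∀ v ∈ Metric.ball (0 : ℂ) ρ, CircleIntegrable (poissonKernel 0 v • u) 0 ρ := by
    intro v hv
    apply ContinuousOn.circleIntegrable'
    refine ContinuousOn.smul ?_ hucont
    rw [poissonKernel_eq_re_herglotzRieszKernel]
    exact Complex.continuous_re.comp_continuousOn (continuousOn_herglotzRieszKernel_sphere hv)
  have e3 : u w - u z = circleAverage (poissonKernel 0 w • u - poissonKernel 0 z • u) 0 ρ := by
    rw [circleAverage_sub (hpk w hwb) (hpk z hzb), e1, e2]
  rw [e3]
  refine abs_circleAverage_le_circleAverage_abs.trans ?_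
  have e4 : circleAverage |poissonKernel 0 w • u - poissonKernel 0 z • u| 0 ρ ≤
      circleAverage (fun x => (8 / (ρ - 1) ^ 2 * ‖w - z‖) * |u x|) 0 ρ := by
    have hci : CircleIntegrable (fun x => (8 / (ρ - 1) ^ 2 * ‖w - z‖) * |u x|) 0 ρ :=
      IntervalIntegrable.const_mul hui.abs (8 / (ρ - 1) ^ 2 * ‖w - z‖)
    apply circleAverage_mono ((hpk w hwb).sub (hpk z hzb)).abs hci
    intro x hx
    have hx' : ‖x‖ = ρ := by simpa [hρ'] using hx
    show |poissonKernel 0 w x * u x - poissonKernel 0 z x * u x| ≤ _ * |u x|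
    rw [← sub_mul, abs_mul]
    gcongr
    rw [poissonKernel_eq_re_herglotzRieszKernel, poissonKernel_eq_re_herglotzRieszKernel]
    simp only [Function.comp_apply]
    rw [← Complex.sub_re]
    refine (Complex.abs_re_le_norm _).trans ?_
    have n1 : (ρ - 1) / 2 ≤ ‖x - w‖ := by
      have := norm_sub_norm_le x w; linarith
    have n2 : (ρ - 1) ≤ ‖x - z‖ := by
      have := norm_sub_norm_le x z; linarith
    have n1' : x - w ≠ 0 := norm_pos_iff.1 (by linarith)
    have n2' : x - z ≠ 0 := norm_pos_iff.1 (by linarith)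
    have : herglotzRieszKernel 0 w x - herglotzRieszKernel 0 z x =
        2 * x * (w - z) / ((x - w) * (x - z)) := by
      simp only [herglotzRieszKernel_def, sub_zero]
      field_simp; ring
    rw [this, norm_div, norm_mul, norm_mul, norm_mul, hx']
    have n3 : 0 < ρ - 1 := by linarith
    calc ‖(2 : ℂ)‖ * ρ * ‖w - z‖ / (‖x - w‖ * ‖x - z‖) ≤
        ‖(2 : ℂ)‖ * ρ * ‖w - z‖ / ((ρ - 1) / 2 * (ρ - 1)) := by gcongr
      _ ≤ 2 * 2 * ‖w - z‖ / ((ρ - 1) / 2 * (ρ - 1)) := by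
          rw [show ‖(2 : ℂ)‖ = 2 by simp]; gcongr
      _ = _ := by field_simp; ring
  refine e4.trans ?_
  have : circleAverage (fun x => (8 / (ρ - 1) ^ 2 * ‖w - z‖) * |u x|) 0 ρ =
      (8 / (ρ - 1) ^ 2 * ‖w - z‖) * circleAverage (fun x => |u x|) 0 ρ := by
    exact circleAverage_fun_smul (a := (8 / (ρ - 1) ^ 2 * ‖w - z‖)) (f := fun x => |u x|)
  rw [this]
  calc _ ≤ (8 / (ρ - 1) ^ 2 * ‖w - z‖) * M := by gcongr
    _ = _ := by ring

/-! ## Part 5: Wronskians -/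

/-- The Wronskian of a family of functions. -/
noncomputable def wron {d : ℕ} (F : Fin d → ℂ → ℂ) (z : ℂ) : ℂ :=
  (Matrix.of fun (i l : Fin d) => iteratedDeriv (l : ℕ) (F i) z).det

theorem wron_linear {d : ℕ} (F : Fin d → ℂ → ℂ) (z : ℂ) (hF : ∀ i, AnalyticAt ℂ (F i) z)
    (B : Matrix (Fin d) (Fin d) ℂ) :
    wron (fun i w => ∑ l, B i l * F l w) z = B.det * wron F z := by
  unfold wron
  rw [← Matrix.det_mul]
  congr 1
  ext i l
  simp only [Matrix.of_apply, Matrix.mul_apply]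
  rw [iteratedDeriv_fun_sum]
  · refine Finset.sum_congr rfl fun j _ => ?_
    rw [iteratedDeriv_const_mul_field]
  · intro j _
    exact contDiffAt_const.mul (hF j).contDiffAt

theorem wron_mul {d : ℕ} (φ : Fin d → ℂ → ℂ) (u : ℂ → ℂ) (z : ℂ)
    (hφ : ∀ i, AnalyticAt ℂ (φ i) z) (hu : AnalyticAt ℂ u z) :
    wron (fun i => φ i * u) z = (u z) ^ d * wron φ z := by
  unfold wron
  have hT : (Matrix.of fun (i l : Fin d) => ((l : ℕ).choose (i : ℕ) : ℂ) *
      iteratedDeriv ((l : ℕ) - (i : ℕ)) u z).det = (u z) ^ d := by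
    rw [Matrix.det_of_isUpperTriangular]
    · simp
    · intro i j hij
      have : (j : ℕ) < (i : ℕ) := hij
      simp [Nat.choose_eq_zero_of_lt this]
  rw [← hT, mul_comm, ← Matrix.det_mul]
  congr 1
  ext i l
  simp only [Matrix.of_apply, Matrix.mul_apply]
  rw [iteratedDeriv_mul (hφ i).contDiffAt hu.contDiffAt]
  rw [Fin.sum_univ_eq_sum_range (fun j => iteratedDeriv j (φ i) z *
    (((l : ℕ).choose j : ℂ) * iteratedDeriv ((l : ℕ) - j) u z)) d]
  have hsub : Finset.range ((l : ℕ) + 1) ⊆ Finset.range d := by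
    apply Finset.range_subset_range.2; omega
  rw [← Finset.sum_subset hsub]
  · refine Finset.sum_congr rfl fun j _ => ?_
    ring
  · intro j _ hj
    have : (l : ℕ) < j := by simpa using hj
    simp [Nat.choose_eq_zero_of_lt this]

theorem wron_congr {d : ℕ} {F G : Fin d → ℂ → ℂ} {z : ℂ} (h : ∀ i, F i =ᶠ[nhds z] G i) :
    wron F z = wron G z := by
  unfold wron
  congr 1
  ext i l
  exact (h i).iteratedDeriv_eq l

theorem wron_bound {d : ℕ} (φ : Fin d → ℂ → ℂ) (z : ℂ) {A X : ℝ} (hA : 1 ≤ A) (hX : 1 ≤ X)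
    (h : ∀ i, ∀ l < d, ‖iteratedDeriv l (φ i) z‖ ≤ A * X ^ l * ‖φ i z‖) :
    ‖wron φ z‖ ≤ (d.factorial : ℝ) * A ^ d * X ^ (d * d) * ∏ i, ‖φ i z‖ := by
  unfold wron
  rw [← Matrix.det_transpose, Matrix.det_apply']
  have h1 : ∀ σ : Equiv.Perm (Fin d), ‖((Equiv.Perm.sign σ : ℤ) : ℂ) *
      ∏ i, (Matrix.of fun (i l : Fin d) => iteratedDeriv (l : ℕ) (φ i) z).transpose (σ i) i‖ ≤
      A ^ d * X ^ (d * d) * ∏ i, ‖φ i z‖ := by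
    intro σ
    rw [norm_mul, norm_prod]
    have hs : ‖((Equiv.Perm.sign σ : ℤ) : ℂ)‖ = 1 := by
      rcases Int.units_eq_one_or (Equiv.Perm.sign σ) with h | h <;> simp [h]
    rw [hs, one_mul]
    calc _ ≤ ∏ i : Fin d, (A * X ^ d * ‖φ i z‖) := by
          apply Finset.prod_le_prod
          · intro i _; positivity
          · intro i _
            simp only [Matrix.transpose_apply, Matrix.of_apply]
            refine (h i _ (σ i).2).trans ?_
            gcongr
            exact (σ i).2.le
      _ = _ := by
          rw [Finset.prod_mul_distrib]; simp [mul_pow, pow_mul]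
  refine (norm_sum_le _ _).trans ((Finset.sum_le_sum fun σ _ => h1 σ).trans ?_)
  rw [Finset.sum_const, Finset.card_univ, Fintype.card_perm, Fintype.card_fin, nsmul_eq_mul]
  apply le_of_eq; ring

theorem analyticAt_iteratedDeriv {f : ℂ → ℂ} {z : ℂ} (hf : AnalyticAt ℂ f z) (l : ℕ) :
    AnalyticAt ℂ (iteratedDeriv l f) z := by
  induction l with
  | zero => simpa using hf
  | succ n ih => rw [iteratedDeriv_succ]; exact ih.deriv

theorem wron_analyticAt {d : ℕ} {F : Fin d → ℂ → ℂ} {z : ℂ} (hF : ∀ i, AnalyticAt ℂ (F i) z) :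
    AnalyticAt ℂ (wron F) z := by
  have : wron F = fun z => ∑ σ : Equiv.Perm (Fin d), ((Equiv.Perm.sign σ : ℤ) : ℂ) *
      ∏ i : Fin d, iteratedDeriv (i : ℕ) (F (σ i)) z := by
    ext z; unfold wron; rw [Matrix.det_apply']; rfl
  rw [this]
  refine Finset.analyticAt_fun_sum _ fun σ _ => analyticAt_const.mul ?_
  exact Finset.analyticAt_fun_prod _ fun i _ => analyticAt_iteratedDeriv (hF _) _

theorem wron_scale {d : ℕ} {F : Fin d → ℂ → ℂ} (hF : ∀ i, Differentiable ℂ (F i)) (r z : ℂ) :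
    wron (fun i w => F i (r * w)) z = r ^ (∑ l : Fin d, (l : ℕ)) * wron F (r * z) := by
  unfold wron
  rw [← Finset.prod_pow_eq_pow_sum, ← Matrix.det_mul_row]
  congr 1
  ext i l
  simp only [Matrix.of_apply]
  rw [iteratedDeriv_comp_const_smul (hF i).contDiff]
  simp

theorem wron_order {d : ℕ} {F : Fin d → ℂ → ℂ} {w : ℂ} (hF : ∀ i, AnalyticAt ℂ (F i) w)
    (n : Fin d → ℕ) (hn : ∀ i, (n i : ℕ∞) ≤ analyticOrderAt (F i) w) :
    ((∑ i, (n i - (d - 1)) : ℕ) : ℕ∞) ≤ analyticOrderAt (wron F) w := by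
  have h1 : ∀ i l : Fin d, ∃ g, AnalyticAt ℂ g w ∧ ∀ᶠ z in nhds w,
      iteratedDeriv (l : ℕ) (F i) z = (z - w) ^ (n i - (d - 1)) • g z := by
    intro i l
    rw [← natCast_le_analyticOrderAt (analyticAt_iteratedDeriv (hF i) l),
      natCast_le_analyticOrderAt_iff_iteratedDeriv_eq_zero (analyticAt_iteratedDeriv (hF i) l)]
    intro j hj
    have h2 := (natCast_le_analyticOrderAt_iff_iteratedDeriv_eq_zero (hF i)).1 (hn i)
    have h3 := h2 (j + l) (by omega)
    rw [iteratedDeriv_eq_iterate, Function.iterate_add_apply] at h3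
    rw [iteratedDeriv_eq_iterate, iteratedDeriv_eq_iterate]
    exact h3
  choose g hg hg' using h1
  rw [natCast_le_analyticOrderAt (wron_analyticAt hF)]
  refine ⟨fun z => (Matrix.of fun i l => g i l z).det, ?_, ?_⟩
  · have : (fun z => (Matrix.of fun i l => g i l z).det) =
      fun z => ∑ σ : Equiv.Perm (Fin d), ((Equiv.Perm.sign σ : ℤ) : ℂ) *
      ∏ i, g (σ i) i z := by
      ext z; rw [Matrix.det_apply']; rfl
    rw [this]
    refine Finset.analyticAt_fun_sum _ fun σ _ => analyticAt_const.mul ?_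
    exact Finset.analyticAt_fun_prod _ fun i _ => hg _ _
  · have : ∀ᶠ z in nhds w, ∀ i l : Fin d, iteratedDeriv (l : ℕ) (F i) z =
        (z - w) ^ (n i - (d - 1)) • g i l z := by
      rw [Filter.eventually_all]; intro i
      rw [Filter.eventually_all]; intro l
      exact hg' i l
    filter_upwards [this] with z hz
    rw [smul_eq_mul, ← Finset.prod_pow_eq_pow_sum, ← Matrix.det_mul_column]
    unfold wron
    congr 1
    ext i l
    simp [hz i l]

theorem wron_zero_dep (d : ℕ) : ∀ (F : Fin d → ℂ → ℂ) (c : ℂ) (r : ℝ), 0 < r →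
    (∀ i, ∀ z ∈ Metric.ball c r, AnalyticAt ℂ (F i) z) →
    (∀ z ∈ Metric.ball c r, wron F z = 0) →
    ∃ v : Fin d → ℂ, v ≠ 0 ∧ ∃ c' r', 0 < r' ∧ Metric.ball c' r' ⊆ Metric.ball c r ∧
      ∀ z ∈ Metric.ball c' r', ∑ i, v i * F i z = 0 := by
  induction d with
  | zero =>
    intro F c r hr _ h
    have := h c (by simpa using hr)
    simp [wron] at this
  | succ d ih =>
    intro F c r hr hF hW
    by_cases h0 : ∀ z ∈ Metric.ball c r, F 0 z = 0
    · refine ⟨Pi.single 0 1, by simp, c, r, hr, subset_rfl, fun z hz => ?_⟩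
      rw [Finset.sum_eq_single 0]
      · simp [h0 z hz]
      · intro i _ hi; simp [hi]
      · simp
    push Not at h0
    obtain ⟨c1, hc1, hc1'⟩ := h0
    obtain ⟨r1, hr1, hsub⟩ : ∃ r1 > 0, Metric.ball c1 r1 ⊆ Metric.ball c r ∩ {z | F 0 z ≠ 0} := by
      rw [← Metric.mem_nhds_iff]
      exact Filter.inter_mem (Metric.isOpen_ball.mem_nhds hc1)
        ((hF 0 c1 hc1).continuousAt.eventually_ne hc1')
    have ha : ∀ i, ∀ z ∈ Metric.ball c1 r1, AnalyticAt ℂ (F i) z :=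
      fun i z hz => hF i z (hsub hz).1
    let φ : Fin (d + 1) → ℂ → ℂ := fun i z => F i z / F 0 z
    have hφ : ∀ i, ∀ z ∈ Metric.ball c1 r1, AnalyticAt ℂ (φ i) z :=
      fun i z hz => (ha i z hz).div (ha 0 z hz) (hsub hz).2
    have hφ0 : ∀ z ∈ Metric.ball c1 r1, φ 0 =ᶠ[nhds z] fun _ => 1 := by
      intro z hz
      filter_upwards [Metric.isOpen_ball.mem_nhds hz] with x hx
      exact div_self (hsub hx).2
    have hW1 : ∀ z ∈ Metric.ball c1 r1, wron φ z = 0 := by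
      intro z hz
      have h1 : wron F z = wron (fun i => φ i * F 0) z := by
        apply wron_congr
        intro i
        filter_upwards [Metric.isOpen_ball.mem_nhds hz] with x hx
        have : F 0 x ≠ 0 := (hsub hx).2
        simp only [φ, Pi.mul_apply]; field_simp
      rw [wron_mul φ (F 0) z (fun i => hφ i z hz) (ha 0 z hz), hW z (hsub hz).1] at h1
      have : F 0 z ≠ 0 := (hsub hz).2
      simpa [this] using h1.symm
    have hW2 : ∀ z ∈ Metric.ball c1 r1, wron (fun i : Fin d => deriv (φ i.succ)) z = 0 := by
      intro z hz
      rw [← hW1 z hz]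
      unfold wron
      rw [Matrix.det_succ_row_zero, Fin.sum_univ_succ]
      have : ∀ l : Fin d, iteratedDeriv ((l.succ : Fin (d + 1)) : ℕ) (φ 0) z = 0 := by
        intro l
        rw [(hφ0 z hz).iteratedDeriv_eq, iteratedDeriv_const]; simp
      rw [Finset.sum_eq_zero]
      · have h3 : φ 0 z = 1 := (hφ0 z hz).eq_of_nhds
        simp only [Matrix.of_apply]
        simp only [Fin.val_zero, pow_zero, one_mul, iteratedDeriv_zero, h3, add_zero,
          Fin.succAbove_zero]
        congr 1
        ext i l
        simp [iteratedDeriv_succ']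
      · intro l _
        simp only [Matrix.of_apply]
        rw [this l]; simp
    obtain ⟨v, hv, c2, r2, hr2, hsub2, hv2⟩ := ih (fun i => deriv (φ i.succ)) c1 r1 hr1
      (fun i z hz => (hφ _ z hz).deriv) hW2
    -- constant
    have hconst : ∀ z ∈ Metric.ball c2 r2, ∑ i, v i * φ i.succ z = ∑ i, v i * φ i.succ c2 := by
      intro z hz
      have hd : ∀ x ∈ Metric.ball c2 r2, HasDerivAt (fun z => ∑ i, v i * φ i.succ z) 0 x := by
        intro x hx
        rw [← hv2 x hx]
        apply HasDerivAt.fun_sum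
        intro i _
        exact ((hφ _ x (hsub2 hx)).differentiableAt.hasDerivAt).const_mul _
      have := (convex_ball c2 r2).is_const_of_fderivWithin_eq_zero (𝕜 := ℂ)
        (f := fun z => ∑ i, v i * φ i.succ z)
        (fun x hx => (hd x hx).differentiableAt.differentiableWithinAt)
        (fun x hx => by
          rw [fderivWithin_of_isOpen Metric.isOpen_ball hx]
          have h := (hd x hx).hasFDerivAt.fderiv
          rw [h]; ext; simp) hz (Metric.mem_ball_self hr2)
      exact this
    refine ⟨Fin.cons (-∑ i, v i * φ i.succ c2) v, ?_, c2, r2, hr2,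
      hsub2.trans (fun z hz => (hsub hz).1), ?_⟩
    · intro h
      apply hv
      ext i
      have := congrFun h i.succ
      simpa using this
    · intro z hz
      have h0 : F 0 z ≠ 0 := (hsub (hsub2 hz)).2
      rw [Fin.sum_univ_succ]
      simp only [Fin.cons_zero, Fin.cons_succ]
      rw [← hconst z hz, neg_mul, Finset.sum_mul, neg_add_eq_zero]
      refine Finset.sum_congr rfl fun i _ => ?_
      simp only [φ]; field_simp

theorem wron_ne_zero {d : ℕ} {F : Fin d → ℂ → ℂ} (hF : ∀ i, Differentiable ℂ (F i))
    (hli : LinearIndependent ℂ F) : ∃ z, wron F z ≠ 0 := by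
  by_contra h
  push Not at h
  obtain ⟨v, hv, c', r', hr', -, h1⟩ := wron_zero_dep d F 0 1 one_pos
    (fun i z _ => (hF i).analyticAt z) (fun z _ => h z)
  apply hv
  have h2 : ∑ i, v i • F i = 0 := by
    have hd : Differentiable ℂ (∑ i, v i • F i) := by
      apply Differentiable.sum
      intro i _
      exact (hF i).const_smul (v i)
    have ha : AnalyticOnNhd ℂ (∑ i, v i • F i) Set.univ := fun z _ => hd.analyticAt z
    have := ha.eq_of_eventuallyEq (f := ∑ i, v i • F i) (g := 0) (z₀ := c')
      (fun z _ => analyticAt_const) (by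
        filter_upwards [Metric.ball_mem_nhds c' hr'] with z hz
        simpa using h1 z hz)
    exact this
  ext i
  exact Fintype.linearIndependent_iff.1 hli v h2 i

/-! ## Part 6: averages of logarithms of entire functions -/

theorem codisc_ne {g : ℂ → ℂ} (hg : Differentiable ℂ g) {x : ℂ} (hx : g x ≠ 0) (S : Set ℂ) :
    ∀ᶠ z in Filter.codiscreteWithin S, g z ≠ 0 := by
  have h1 : AnalyticOnNhd ℂ g Set.univ := fun z _ => hg.analyticAt z
  have h2 := h1.preimage_zero_mem_codiscrete hx
  have h3 := Filter.codiscreteWithin_mono (Set.subset_univ S) h2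
  filter_upwards [h3] with z hz
  simpa using hz

theorem circInt_log {g : ℂ → ℂ} (hg : Differentiable ℂ g) (R : ℝ) :
    CircleIntegrable (fun z => Real.log ‖g z‖) 0 R :=
  MeromorphicOn.circleIntegrable_log_norm (fun z _ => (hg.analyticAt z).meromorphicAt)

theorem circleAverage_mono_codisc {f g : ℂ → ℝ} {R : ℝ} (hR : R ≠ 0)
    (hf : CircleIntegrable f 0 R) (hg : CircleIntegrable g 0 R)
    (h : ∀ᶠ z in Filter.codiscreteWithin (Metric.sphere 0 |R|), ‖z‖ = |R| → f z ≤ g z) :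
    Real.circleAverage f 0 R ≤ Real.circleAverage g 0 R := by
  classical
  let g' : ℂ → ℝ := fun z => if f z ≤ g z then g z else f z
  have h1 : g =ᶠ[Filter.codiscreteWithin (Metric.sphere 0 |R|)] g' := by
    have h2 : ∀ᶠ z in Filter.codiscreteWithin (Metric.sphere (0 : ℂ) |R|), z ∈ Metric.sphere (0 : ℂ) |R| :=
      Filter.self_mem_codiscreteWithin _
    filter_upwards [h, h2] with z hz hz2
    have := hz (by simpa using hz2)
    simp [g', this]
  rw [Real.circleAverage_congr_codiscreteWithin h1 hR]
  apply Real.circleAverage_mono hf (hg.congr_codiscreteWithin h1)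
  intro z _
  simp only [g']
  split_ifs with h3
  · exact h3
  · exact le_rfl

open Real in
theorem jensen_le {g : ℂ → ℂ} (hg : Differentiable ℂ g) (h0 : g 0 ≠ 0) {R : ℝ} (hR : 0 < R) :
    log ‖g 0‖ ≤ circleAverage (fun z => log ‖g z‖) 0 R := by
  have han : AnalyticOnNhd ℂ g (Metric.closedBall 0 |R|) := fun z _ => hg.analyticAt z
  rw [han.circleAverage_log_norm hR.ne' h0]
  have : 0 ≤ ∑ᶠ (u : ℂ), ((MeromorphicOn.divisor g (Metric.closedBall 0 |R|)) u : ℝ) *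
      log (R * ‖0 - u‖⁻¹) := by
    apply finsum_nonneg
    intro u
    by_cases hu : u ∈ Metric.closedBall (0 : ℂ) |R|
    · apply mul_nonneg
      · exact_mod_cast MeromorphicOn.AnalyticOnNhd.divisor_nonneg han u
      · rcases eq_or_ne u 0 with rfl | hu0
        · simp
        · apply log_nonneg
          have h1 : ‖u‖ ≤ R := by simpa [abs_of_pos hR] using hu
          have h2 : 0 < ‖u‖ := norm_pos_iff.2 hu0
          rw [zero_sub, norm_neg, ← div_eq_mul_inv, le_div_iff₀ h2]; linarith
    · rw [Function.locallyFinsuppWithin.apply_eq_zero_of_notMem _ hu]; simp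
  linarith

open Real in
theorem factor_log {g h : ℂ → ℂ} {n : ℕ} {a : Fin n → ℂ}
    (hgh : ∀ z, g z = (∏ i, (z - a i)) * h z) {z : ℂ} (hz : g z ≠ 0) :
    log ‖g z‖ = ∑ i, log ‖z - a i‖ + log ‖h z‖ := by
  have h1 := hz
  rw [hgh] at h1
  obtain ⟨h2, h3⟩ := mul_ne_zero_iff.1 h1
  rw [hgh, norm_mul, log_mul (norm_ne_zero_iff.2 h2) (norm_ne_zero_iff.2 h3), norm_prod, log_prod]
  intro i _
  exact norm_ne_zero_iff.2 (Finset.prod_ne_zero_iff.1 h2 i (Finset.mem_univ _))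

open Real in
theorem factor_count {g : ℂ → ℂ} (hg : Differentiable ℂ g) (h0 : g 0 ≠ 0) {ρ M : ℝ} (h1 : 1 < ρ)
    (h2 : ρ ≤ 2) (hM : circleAverage (fun z => log ‖g z‖) 0 (ρ ^ 2) - log ‖g 0‖ ≤ M) :
    ∃ (n : ℕ) (a : Fin n → ℂ) (h : ℂ → ℂ), (∀ i, ‖a i‖ ≤ ρ) ∧ Differentiable ℂ h ∧
      (∀ z, g z = (∏ i, (z - a i)) * h z) ∧ (∀ z, ‖z‖ ≤ ρ → h z ≠ 0) ∧ (n : ℝ) ≤ 2 * M / (ρ - 1) := by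
  have hρ : 0 < ρ := by linarith
  obtain ⟨n, a, h, ha, hh, hgh, hnz⟩ := exists_factor hg h0 hρ
  refine ⟨n, a, h, ha, hh, hgh, hnz, ?_⟩
  have hR : (0 : ℝ) < ρ ^ 2 := by positivity
  have hint : ∀ i, CircleIntegrable (fun z => log ‖z - a i‖) 0 (ρ ^ 2) :=
    fun i => circleIntegrable_log_norm_sub_const _
  have e1 : circleAverage (fun z => log ‖g z‖) 0 (ρ ^ 2) =
      circleAverage (fun z => ∑ i, log ‖z - a i‖ + log ‖h z‖) 0 (ρ ^ 2) := by
    apply circleAverage_congr_codiscreteWithin _ hR.ne'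
    filter_upwards [codisc_ne hg h0 _] with z hz
    exact factor_log hgh hz
  rw [circleAverage_fun_add (CircleIntegrable.fun_sum _ fun i _ => hint i) (circInt_log hh _),
    circleAverage_fun_sum fun i _ => hint i] at e1
  have e2 : ∀ i, circleAverage (fun z => log ‖z - a i‖) 0 (ρ ^ 2) = log (ρ ^ 2) := by
    intro i
    apply circleAverage_log_norm_sub_const_of_mem_closedBall
    simp only [Metric.mem_closedBall, dist_zero_right]
    refine (ha i).trans ((?_ : ρ ≤ ρ ^ 2).trans (le_abs_self _))
    nlinarith
  simp only [e2, Finset.sum_const, Finset.card_univ, Fintype.card_fin, nsmul_eq_mul, log_pow] at e1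
  have e3 := jensen_le hh (hnz 0 (by simpa using hρ.le)) hR
  have e4 := factor_log hgh h0
  have e5 : ∑ i, log ‖0 - a i‖ ≤ n * log ρ := by
    calc _ ≤ ∑ _i : Fin n, log ρ := by
          apply Finset.sum_le_sum
          intro i _
          have : (0 : ℂ) - a i ≠ 0 := by
            rw [hgh] at h0
            exact Finset.prod_ne_zero_iff.1 (mul_ne_zero_iff.1 h0).1 i (Finset.mem_univ _)
          apply log_le_log (norm_pos_iff.2 this)
          simpa using ha i
      _ = _ := by simp
  push_cast at e1
  have e6 : n * log ρ ≤ M := by nlinarith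
  have e7 : (ρ - 1) / 2 ≤ log ρ := by
    have h3 := Real.one_sub_inv_le_log_of_pos hρ
    refine le_trans ?_ h3
    have : ρ⁻¹ * ρ = 1 := inv_mul_cancel₀ hρ.ne'
    have : 0 < ρ⁻¹ := by positivity
    nlinarith
  rw [le_div_iff₀ (by linarith)]
  have : (0 : ℝ) ≤ n := by positivity
  nlinarith

open Real in
theorem log_shift {D t : ℝ} {x : ℝ} (hD : 0 < D) (ht : t ≤ D / 2) (hx : |x - D| ≤ t) :
    0 < x ∧ |log x - log D| ≤ 2 * t / D := by
  rw [abs_le] at hx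
  have h0 : 0 ≤ t := by linarith
  have hx0 : 0 < x := by linarith
  refine ⟨hx0, ?_⟩
  rw [abs_le]
  rw [← log_div hx0.ne' hD.ne']
  constructor
  · have h1 := Real.one_sub_inv_le_log_of_pos (x := x / D) (by positivity)
    refine le_trans ?_ h1
    rw [inv_div]
    have h2 : D / x - 1 ≤ 2 * t / D := by
      rw [div_sub_one hx0.ne', div_le_div_iff₀ hx0 hD]
      nlinarith
    linarith
  · have h1 := Real.log_le_sub_one_of_pos (x := x / D) (by positivity)
    refine h1.trans ?_
    rw [div_sub_one hD.ne']
    gcongr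
    linarith

/-! ## Part 7: the logarithmic derivative lemma -/

open Real in
theorem avg_log_h {g1 g2 h1 h2 : ℂ → ℂ} {n1 n2 : ℕ} {a1 : Fin n1 → ℂ} {a2 : Fin n2 → ℂ} {ρ M : ℝ}
    (hρ1 : 1 < ρ) (hρ2 : ρ ≤ 2)
    (dg1 : Differentiable ℂ g1) (dg2 : Differentiable ℂ g2)
    (dh1 : Differentiable ℂ h1) (dh2 : Differentiable ℂ h2)
    (f1 : ∀ z, g1 z = (∏ i, (z - a1 i)) * h1 z) (f2 : ∀ z, g2 z = (∏ i, (z - a2 i)) * h2 z)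
    (ha1 : ∀ i, ‖a1 i‖ ≤ ρ) (ha2 : ∀ i, ‖a2 i‖ ≤ ρ)
    (z1 : g1 0 ≠ 0) (z2 : g2 0 ≠ 0)
    (hM : circleAverage (fun z => |log ‖g1 z‖ - log ‖g2 z‖|) 0 ρ ≤ M) :
    circleAverage (fun z => |log ‖h1 z‖ - log ‖h2 z‖|) 0 ρ ≤ M + 4 * (n1 + n2) := by
  have hi1 : ∀ i, CircleIntegrable (fun z => |log ‖z - a1 i‖|) 0 ρ :=
    fun i => (circleIntegrable_log_norm_sub_const _).abs
  have hi2 : ∀ i, CircleIntegrable (fun z => |log ‖z - a2 i‖|) 0 ρ :=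
    fun i => (circleIntegrable_log_norm_sub_const _).abs
  have hi3 : CircleIntegrable (fun z => |log ‖g1 z‖ - log ‖g2 z‖|) 0 ρ :=
    ((circInt_log dg1 ρ).sub (circInt_log dg2 ρ)).abs
  have hi4 : CircleIntegrable (fun z => |log ‖h1 z‖ - log ‖h2 z‖|) 0 ρ :=
    ((circInt_log dh1 ρ).sub (circInt_log dh2 ρ)).abs
  have hs1 : CircleIntegrable (fun z => ∑ i, |log ‖z - a1 i‖|) 0 ρ :=
    CircleIntegrable.fun_sum _ fun i _ => hi1 i
  have hs2 : CircleIntegrable (fun z => ∑ i, |log ‖z - a2 i‖|) 0 ρ :=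
    CircleIntegrable.fun_sum _ fun i _ => hi2 i
  have hs3 : CircleIntegrable (fun z => ∑ i, |log ‖z - a1 i‖| + ∑ i, |log ‖z - a2 i‖|) 0 ρ :=
    hs1.add hs2
  have key : circleAverage (fun z => |log ‖h1 z‖ - log ‖h2 z‖|) 0 ρ ≤
      circleAverage (fun z => |log ‖g1 z‖ - log ‖g2 z‖| +
        (∑ i, |log ‖z - a1 i‖| + ∑ i, |log ‖z - a2 i‖|)) 0 ρ := by
    apply circleAverage_mono_codisc (by linarith) hi4 (hi3.add hs3)
    filter_upwards [codisc_ne dg1 z1 _, codisc_ne dg2 z2 _] with z hz1 hz2 _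
    have e1 := factor_log f1 hz1
    have e2 := factor_log f2 hz2
    have e3 := Finset.abs_sum_le_sum_abs (fun i => log ‖z - a1 i‖) Finset.univ
    have e4 := Finset.abs_sum_le_sum_abs (fun i => log ‖z - a2 i‖) Finset.univ
    have : log ‖h1 z‖ - log ‖h2 z‖ = (log ‖g1 z‖ - log ‖g2 z‖) +
      (-(∑ i, log ‖z - a1 i‖) + ∑ i, log ‖z - a2 i‖) := by rw [e1, e2]; ring
    rw [this]
    refine (abs_add_le _ _).trans ?_
    refine add_le_add le_rfl ?_
    refine (abs_add_le _ _).trans ?_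
    rw [abs_neg]
    exact add_le_add e3 e4
  rw [circleAverage_fun_add hi3 hs3, circleAverage_fun_add hs1 hs2,
    circleAverage_fun_sum fun i _ => hi1 i, circleAverage_fun_sum fun i _ => hi2 i] at key
  have b1 : ∑ i, circleAverage (fun z => |log ‖z - a1 i‖|) 0 ρ ≤ n1 * 4 := by
    calc _ ≤ ∑ _i : Fin n1, (4 : ℝ) :=
          Finset.sum_le_sum fun i _ => circle_abs_log hρ1.le hρ2 (ha1 i)
      _ = _ := by simp
  have b2 : ∑ i, circleAverage (fun z => |log ‖z - a2 i‖|) 0 ρ ≤ n2 * 4 := by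
    calc _ ≤ ∑ _i : Fin n2, (4 : ℝ) :=
          Finset.sum_le_sum fun i _ => circle_abs_log hρ1.le hρ2 (ha2 i)
      _ = _ := by simp
  linarith

open Real in
theorem sum_log_shift {n : ℕ} {a : Fin n → ℂ} {z w : ℂ} {X : ℝ} (hX0 : 0 < X)
    (hz : ∀ i, z - a i ≠ 0) (hX : ∑ i, ‖z - a i‖⁻¹ ≤ X) (hw : ‖w - z‖ ≤ 1 / (4 * X)) :
    (∀ i, w - a i ≠ 0) ∧ |∑ i, log ‖w - a i‖ - ∑ i, log ‖z - a i‖| ≤ 1 / 2 := by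
  have key : ∀ i, 0 < ‖w - a i‖ ∧ |log ‖w - a i‖ - log ‖z - a i‖| ≤
      2 * (1 / (4 * X)) / ‖z - a i‖ := by
    intro i
    have hp : 0 < ‖z - a i‖ := norm_pos_iff.2 (hz i)
    have h1 : ‖z - a i‖⁻¹ ≤ X :=
      (Finset.single_le_sum (f := fun i => ‖z - a i‖⁻¹) (fun j _ => by positivity)
        (Finset.mem_univ i)).trans hX
    have h2 : X⁻¹ ≤ ‖z - a i‖ := inv_le_of_inv_le₀ hp h1
    apply log_shift hp
    · have : 1 / (4 * X) = X⁻¹ / 4 := by field_simp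
      have : 0 < X⁻¹ := by positivity
      linarith
    · refine (abs_norm_sub_norm_le _ _).trans ?_
      simpa using hw
  refine ⟨fun i => norm_pos_iff.1 (key i).1, ?_⟩
  rw [← Finset.sum_sub_distrib]
  refine (Finset.abs_sum_le_sum_abs _ _).trans ?_
  calc _ ≤ ∑ i, 2 * (1 / (4 * X)) / ‖z - a i‖ := Finset.sum_le_sum fun i _ => (key i).2
    _ = 2 * (1 / (4 * X)) * ∑ i, ‖z - a i‖⁻¹ := by
        rw [Finset.mul_sum]; simp only [div_eq_mul_inv]
    _ ≤ 2 * (1 / (4 * X)) * X := by gcongr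
    _ = 1 / 2 := by field_simp; norm_num

open Real in
theorem ratio_bound {g1 g2 h1 h2 : ℂ → ℂ} {n1 n2 : ℕ} {a1 : Fin n1 → ℂ} {a2 : Fin n2 → ℂ} {ρ M : ℝ}
    (hρ1 : 1 < ρ) (hρ2 : ρ ≤ 2)
    (dg1 : Differentiable ℂ g1) (dg2 : Differentiable ℂ g2)
    (dh1 : Differentiable ℂ h1) (dh2 : Differentiable ℂ h2)
    (f1 : ∀ z, g1 z = (∏ i, (z - a1 i)) * h1 z) (f2 : ∀ z, g2 z = (∏ i, (z - a2 i)) * h2 z)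
    (ha1 : ∀ i, ‖a1 i‖ ≤ ρ) (ha2 : ∀ i, ‖a2 i‖ ≤ ρ)
    (z1 : g1 0 ≠ 0) (z2 : g2 0 ≠ 0)
    (nz1 : ∀ z, ‖z‖ ≤ ρ → h1 z ≠ 0) (nz2 : ∀ z, ‖z‖ ≤ ρ → h2 z ≠ 0)
    (hM : circleAverage (fun z => |log ‖g1 z‖ - log ‖g2 z‖|) 0 ρ ≤ M)
    {z w : ℂ} {X : ℝ} (hz : ‖z‖ = 1) (hg1 : g1 z ≠ 0) (hg2 : g2 z ≠ 0)
    (hX1 : ∑ i, ‖z - a1 i‖⁻¹ ≤ X) (hX2 : ∑ i, ‖z - a2 i‖⁻¹ ≤ X)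
    (hX3 : 8 * (M + 4 * (n1 + n2)) / (ρ - 1) ^ 2 ≤ X) (hX4 : 1 / (ρ - 1) ≤ X)
    (hw : ‖w - z‖ ≤ 1 / (4 * X)) :
    g2 w ≠ 0 ∧ ‖g1 w / g2 w‖ ≤ exp 2 * ‖g1 z / g2 z‖ := by
  have hρ0 : 0 < ρ - 1 := by linarith
  have hX0 : 0 < X := lt_of_lt_of_le (by positivity) hX4
  have y1 : ∀ i, z - a1 i ≠ 0 := by
    intro i; rw [f1] at hg1
    exact Finset.prod_ne_zero_iff.1 (mul_ne_zero_iff.1 hg1).1 i (Finset.mem_univ _)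
  have y2 : ∀ i, z - a2 i ≠ 0 := by
    intro i; rw [f2] at hg2
    exact Finset.prod_ne_zero_iff.1 (mul_ne_zero_iff.1 hg2).1 i (Finset.mem_univ _)
  obtain ⟨p1, q1⟩ := sum_log_shift hX0 y1 hX1 hw
  obtain ⟨p2, q2⟩ := sum_log_shift hX0 y2 hX2 hw
  have hwn : ‖w‖ ≤ (1 + ρ) / 2 := by
    have h3 : 1 / (4 * X) ≤ (ρ - 1) / 4 := by
      rw [div_le_iff₀ hρ0] at hX4
      rw [div_le_div_iff₀ (by positivity) (by norm_num)]; nlinarith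
    have := norm_sub_norm_le w z
    linarith
  have hwρ : ‖w‖ ≤ ρ := by linarith
  have hw1 : g1 w ≠ 0 := by
    rw [f1]; exact mul_ne_zero (Finset.prod_ne_zero_iff.2 fun i _ => p1 i) (nz1 w hwρ)
  have hw2 : g2 w ≠ 0 := by
    rw [f2]; exact mul_ne_zero (Finset.prod_ne_zero_iff.2 fun i _ => p2 i) (nz2 w hwρ)
  refine ⟨hw2, ?_⟩
  have hharm : InnerProductSpace.HarmonicOnNhd (fun z => log ‖h1 z‖ - log ‖h2 z‖)
      (Metric.closedBall 0 ρ) := by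
    intro x hx
    have hx' : ‖x‖ ≤ ρ := by simpa using hx
    exact ((dh1.analyticAt x).harmonicAt_log_norm (nz1 x hx')).sub
      ((dh2.analyticAt x).harmonicAt_log_norm (nz2 x hx'))
  have hav := avg_log_h hρ1 hρ2 dg1 dg2 dh1 dh2 f1 f2 ha1 ha2 z1 z2 hM
  have hp := poisson_lip hρ1 hρ2 hharm hav hz hwn
  have hp2 : |(log ‖h1 w‖ - log ‖h2 w‖) - (log ‖h1 z‖ - log ‖h2 z‖)| ≤ 1 / 4 := by
    refine hp.trans ?_
    calc _ ≤ X * (1 / (4 * X)) := by gcongr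
      _ = 1 / 4 := by field_simp
  have e1 := factor_log f1 hw1
  have e2 := factor_log f2 hw2
  have e3 := factor_log f1 hg1
  have e4 := factor_log f2 hg2
  rw [abs_le] at q1 q2 hp2
  have hlog : log ‖g1 w / g2 w‖ ≤ log (exp 2 * ‖g1 z / g2 z‖) := by
    rw [log_mul (exp_pos _).ne' (norm_ne_zero_iff.2 (div_ne_zero hg1 hg2)), log_exp, norm_div,
      norm_div, log_div (norm_ne_zero_iff.2 hw1) (norm_ne_zero_iff.2 hw2),
      log_div (norm_ne_zero_iff.2 hg1) (norm_ne_zero_iff.2 hg2)]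
    linarith [q1.1, q1.2, q2.1, q2.2, hp2.1, hp2.2]
  exact (log_le_log_iff (norm_pos_iff.2 (div_ne_zero hw1 hw2))
    (mul_pos (exp_pos _) (norm_pos_iff.2 (div_ne_zero hg1 hg2)))).1 hlog

/-! ## Part 8: the logarithmic derivative lemma for Wronskians -/

open Real in
theorem wron_pointwise {ι : Type*} {d : ℕ} (hd : 0 < d) (G : ι → ℂ → ℂ)
    (dG : ∀ j, Differentiable ℂ (G j)) {z : ℂ} {X : ℝ} (hX : 1 ≤ X)
    (hz : ∀ j, G j z ≠ 0)
    (h : ∀ i j w, ‖w - z‖ ≤ 1 / (4 * X) →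
      G j w ≠ 0 ∧ ‖G i w / G j w‖ ≤ exp 2 * ‖G i z / G j z‖) (e : Fin d → ι) :
    ‖wron (fun i => G (e i)) z‖ ≤ ((d.factorial : ℝ) * (d.factorial * exp 2 * 4 ^ d) ^ d * X ^ (d * d))
      * ∏ i, ‖G (e i) z‖ := by
  set j0 := e ⟨0, hd⟩ with hj0
  have ht : 0 < 1 / (4 * X) := by positivity
  let φ : Fin d → ℂ → ℂ := fun i w => G (e i) w / G j0 w
  have hφ : ∀ i, ∀ w, ‖w - z‖ ≤ 1 / (4 * X) → AnalyticAt ℂ (φ i) w := fun i w hw =>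
    ((dG _).analyticAt w).div ((dG _).analyticAt w) (h j0 j0 w hw).1
  have hbd : ∀ i, ∀ l < d, ‖iteratedDeriv l (φ i) z‖ ≤
      (d.factorial * exp 2 * 4 ^ d) * X ^ l * ‖φ i z‖ := by
    intro i l hl
    have hdc : DiffContOnCl ℂ (φ i) (Metric.ball z (1 / (4 * X))) := by
      apply DifferentiableOn.diffContOnCl
      rw [closure_ball _ ht.ne']
      intro w hw
      exact (hφ i w (by simpa [dist_eq_norm] using hw)).differentiableAt.differentiableWithinAt
    have h1 := Complex.norm_iteratedDeriv_le_of_forall_mem_sphere_norm_le (C := exp 2 * ‖φ i z‖)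
      l ht hdc (fun w hw => (h (e i) j0 w (by
        have : ‖w - z‖ = 1 / (4 * X) := by simpa [dist_eq_norm] using hw
        exact this.le)).2)
    refine h1.trans ?_
    have h2 : (l.factorial : ℝ) * (exp 2 * ‖φ i z‖) / (1 / (4 * X)) ^ l =
        (l.factorial * exp 2 * 4 ^ l) * X ^ l * ‖φ i z‖ := by
      rw [div_pow, one_pow, mul_pow]; field_simp
    rw [h2]
    gcongr
    norm_num
  have hA : (1 : ℝ) ≤ d.factorial * exp 2 * 4 ^ d := by
    have h1 : (1 : ℝ) ≤ d.factorial := by exact_mod_cast Nat.factorial_pos d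
    have h2 : (1 : ℝ) ≤ exp 2 := one_le_exp (by norm_num)
    have h3 : (1 : ℝ) ≤ 4 ^ d := one_le_pow₀ (by norm_num)
    exact one_le_mul_of_one_le_of_one_le (one_le_mul_of_one_le_of_one_le h1 h2) h3
  have hw := wron_bound φ z hA hX hbd
  have hself : ‖z - z‖ ≤ 1 / (4 * X) := by simpa using ht.le
  have e1 : wron (fun i => G (e i)) z = G j0 z ^ d * wron φ z := by
    rw [← wron_mul φ (G j0) z (fun i => hφ i z hself) ((dG _).analyticAt z)]
    apply wron_congr
    intro i
    filter_upwards [(dG j0).continuous.continuousAt.eventually_ne (hz j0)] with w hw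
    simp only [φ, Pi.mul_apply]; field_simp
  rw [e1, norm_mul, norm_pow]
  have e2 : ∏ i, ‖φ i z‖ = (∏ i, ‖G (e i) z‖) / ‖G j0 z‖ ^ d := by
    simp only [φ, norm_div, Finset.prod_div_distrib]; simp
  have h0 : 0 < ‖G j0 z‖ := norm_pos_iff.2 (hz j0)
  calc _ ≤ ‖G j0 z‖ ^ d * (_ * ∏ i, ‖φ i z‖) := by gcongr
    _ = _ := by rw [e2]; field_simp

open Real in
theorem sqrt_sum_le {κ : Type*} (s : Finset κ) (f : κ → ℝ) (hf : ∀ i, 0 ≤ f i) :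
    √(∑ i ∈ s, f i) ≤ ∑ i ∈ s, √(f i) := by
  classical
  induction s using Finset.induction_on with
  | empty => simp
  | insert a s ha ih =>
    rw [Finset.sum_insert ha, Finset.sum_insert ha]
    refine le_trans ?_ (add_le_add le_rfl ih)
    rw [Real.sqrt_le_left (by positivity), add_sq, Real.sq_sqrt (hf a),
      Real.sq_sqrt (Finset.sum_nonneg fun i _ => hf i)]
    nlinarith [mul_nonneg (Real.sqrt_nonneg (f a)) (Real.sqrt_nonneg (∑ i ∈ s, f i))]

open Real in
theorem ldl {ι : Type*} [Fintype ι] {d : ℕ} (hd : 0 < d) : ∃ K : ℝ, 0 ≤ K ∧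
    ∀ (G : ι → ℂ → ℂ) (ρ M : ℝ), (∀ j, Differentiable ℂ (G j)) → (∀ j, G j 0 ≠ 0) → 1 < ρ → ρ ≤ 2 →
      1 ≤ M → (∀ i j, circleAverage (fun z => |log ‖G i z‖ - log ‖G j z‖|) 0 ρ ≤ M) →
      (∀ j, circleAverage (fun z => log ‖G j z‖) 0 (ρ ^ 2) - log ‖G j 0‖ ≤ M) →
      ∃ V : ℂ → ℝ, CircleIntegrable V 0 1 ∧ circleAverage V 0 1 ≤ K * (1 + log (M / (ρ - 1))) ∧
        ∀ z, ‖z‖ = 1 → (∀ j, G j z ≠ 0) → ∀ e : Fin d → ι,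
          ‖wron (fun i => G (e i)) z‖ ≤ exp (V z) * ∏ i, ‖G (e i) z‖ := by
  set D : ℝ := (d.factorial : ℝ) * (d.factorial * exp 2 * 4 ^ d) ^ d with hD
  have hD0 : 0 < D := by positivity
  set Q : ℝ := 136 + 2 * Fintype.card ι * sinC with hQ
  have hsC := sinC_nonneg
  have hQ0 : 1 ≤ Q := by rw [hQ]; nlinarith [show (0:ℝ) ≤ 2 * Fintype.card ι * sinC by positivity]
  refine ⟨|log D| + d * d * (2 + 2 * log Q) + d * d * 6, ?_, ?_⟩
  · have := log_nonneg hQ0; positivity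
  intro G ρ M dG hG0 hρ1 hρ2 hM1 hMij hMj
  have hρ0 : 0 < ρ - 1 := by linarith
  choose n a h ha dh hf hnz hn using fun j => factor_count (dG j) (hG0 j) hρ1 hρ2 (hMj j)
  set q := M / (ρ - 1) with hq
  have hq1 : 1 ≤ q := by rw [hq, le_div_iff₀ hρ0]; linarith
  have hlq : 0 ≤ log q := log_nonneg hq1
  set Y : ℝ := 136 * q ^ 3 with hY
  have hY1 : 1 ≤ Y := by
    have : 1 ≤ q ^ 3 := one_le_pow₀ hq1
    rw [hY]; linarith
  let S : ℂ → ℝ := fun z => ∑ j, ∑ i, ‖z - a j i‖⁻¹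
  let S' : ℂ → ℝ := fun z => ∑ j, ∑ i, (√‖z - a j i‖)⁻¹
  have hS0 : ∀ z, 0 ≤ S z := fun z => Finset.sum_nonneg fun j _ => Finset.sum_nonneg fun i _ => by positivity
  let X : ℂ → ℝ := fun z => Y + S z
  have hX1 : ∀ z, 1 ≤ X z := fun z => by have := hS0 z; simp only [X]; linarith
  -- averages
  have hSi : CircleIntegrable S' 0 1 := CircleIntegrable.fun_sum _ fun j _ =>
    CircleIntegrable.fun_sum _ fun i _ => (circle_half _).1
  have hSa : circleAverage S' 0 1 ≤ 2 * Fintype.card ι * sinC * q := by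
    simp only [S']
    rw [circleAverage_fun_sum fun j _ => CircleIntegrable.fun_sum _ fun i _ => (circle_half _).1]
    calc _ ≤ ∑ _j : ι, (2 * q) * sinC := by
          apply Finset.sum_le_sum
          intro j _
          rw [circleAverage_fun_sum fun i _ => (circle_half _).1]
          calc _ ≤ ∑ _i : Fin (n j), sinC := Finset.sum_le_sum fun i _ => (circle_half _).2
            _ = n j * sinC := by simp
            _ ≤ _ := by
              gcongr
              refine (hn j).trans (le_of_eq ?_)
              rw [hq]; ring
      _ = _ := by simp; ring
  set c0 : ℝ := Q * q ^ 3 with hc0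
  have hc01 : 0 < c0 := by positivity
  have hqq : q ≤ q ^ 3 := le_self_pow₀ hq1 (by norm_num)
  have hsY : √Y + 2 * Fintype.card ι * sinC * q ≤ c0 := by
    have h1 : √Y ≤ Y := by
      rw [Real.sqrt_le_left (by linarith)]; nlinarith
    have h2 : 2 * Fintype.card ι * sinC * q ≤ 2 * Fintype.card ι * sinC * q ^ 3 := by gcongr
    rw [hc0, hQ]; rw [hY] at h1 ⊢; linarith
  let V : ℂ → ℝ := fun z => (log D + d * d * (2 * (√Y / c0) + 2 * log c0)) + (d * d * 2 / c0) • S' z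
  have hVi : CircleIntegrable V 0 1 :=
    (circleIntegrable_const _ _ _).add (CircleIntegrable.const_smul hSi)
  refine ⟨V, hVi, ?_, ?_⟩
  · have e1 : circleAverage V 0 1 = (log D + d * d * (2 * (√Y / c0) + 2 * log c0)) +
        (d * d * 2 / c0) * circleAverage S' 0 1 := by
      have hsm : CircleIntegrable (fun z => (d * d * 2 / c0 : ℝ) • S' z) 0 1 :=
        CircleIntegrable.const_smul hSi
      simp only [V]
      rw [circleAverage_fun_add (circleIntegrable_const _ _ _) hsm,
        circleAverage_const, circleAverage_fun_smul, smul_eq_mul]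
    rw [e1]
    have e2 : d * d * (2 * (√Y / c0)) + (d * d * 2 / c0) * circleAverage S' 0 1 ≤ d * d * 2 := by
      have : d * d * (2 * (√Y / c0)) + (d * d * 2 / c0) * circleAverage S' 0 1 =
        d * d * 2 * ((√Y + circleAverage S' 0 1) / c0) := by ring
      rw [this]
      have h3 : (√Y + circleAverage S' 0 1) / c0 ≤ 1 := by
        rw [div_le_one hc01]; linarith
      nlinarith [show (0 : ℝ) ≤ d * d * 2 by positivity]
    have e3 : log c0 = log Q + 3 * log q := by
      rw [hc0, log_mul (by positivity) (by positivity), log_pow]; norm_num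
    have e4 := le_abs_self (log D)
    have e5 := log_nonneg hQ0
    have e6 : 0 ≤ (|log D| + d * d * (2 + 2 * log Q)) * log q := by positivity
    rw [e3]
    nlinarith
  · intro z hz hGz e
    have hw : ∀ i j w, ‖w - z‖ ≤ 1 / (4 * X z) →
        G j w ≠ 0 ∧ ‖G i w / G j w‖ ≤ exp 2 * ‖G i z / G j z‖ := by
      intro i j w hw
      have hsum : ∀ j, ∑ i, ‖z - a j i‖⁻¹ ≤ X z := by
        intro j
        have h1 : ∑ i, ‖z - a j i‖⁻¹ ≤ S z :=
          Finset.single_le_sum (f := fun j => ∑ i, ‖z - a j i‖⁻¹)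
            (fun j _ => Finset.sum_nonneg fun i _ => by positivity) (Finset.mem_univ j)
        simp only [X]; linarith
      refine ratio_bound hρ1 hρ2 (dG i) (dG j) (dh i) (dh j) (hf i) (hf j) (ha i) (ha j)
        (hG0 i) (hG0 j) (hnz i) (hnz j) (hMij i j) hz (hGz i) (hGz j) (hsum i) (hsum j) ?_ ?_ hw
      · have h1 : 8 * (M + 4 * ((n i : ℝ) + n j)) / (ρ - 1) ^ 2 ≤ Y := by
          have h2 : M ≤ q := by rw [hq, le_div_iff₀ hρ0]; nlinarith
          have h3 : ∀ j, (n j : ℝ) ≤ 2 * q := fun j => (hn j).trans (le_of_eq (by rw [hq]; ring))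
          have h4 : 1 / (ρ - 1) ≤ q := by rw [hq]; gcongr
          have h5 : (M + 4 * ((n i : ℝ) + n j)) ≤ 17 * q := by linarith [h3 i, h3 j]
          have h6 : (1 / (ρ - 1)) ^ 2 ≤ q ^ 2 := by gcongr
          calc _ = 8 * (M + 4 * ((n i : ℝ) + n j)) * (1 / (ρ - 1)) ^ 2 := by field_simp
            _ ≤ 8 * (17 * q) * q ^ 2 := by gcongr
            _ = Y := by rw [hY]; ring
        have := hS0 z
        simp only [X]; linarith
      · have h4 : 1 / (ρ - 1) ≤ q := by rw [hq]; gcongr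
        have := hS0 z
        simp only [X, hY]; linarith
    refine (wron_pointwise hd G dG (hX1 z) hGz hw e).trans ?_
    gcongr
    rw [← hD]
    have hX0 : 0 < X z := by linarith [hX1 z]
    rw [← Real.log_le_iff_le_exp (by positivity), log_mul hD0.ne' (by positivity), log_pow]
    have h1 : √(X z) ≤ √Y + S' z := by
      have h2 : √(X z) ≤ √Y + √(S z) := by
        rw [Real.sqrt_le_left (by positivity), add_sq, Real.sq_sqrt (by linarith),
          Real.sq_sqrt (hS0 z)]
        have : 0 ≤ 2 * √Y * √(S z) := by positivity
        simp only [X]; linarith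
      have h3 : √(S z) ≤ S' z := by
        refine (sqrt_sum_le _ _ fun j => Finset.sum_nonneg fun i _ => by positivity).trans ?_
        apply Finset.sum_le_sum
        intro j _
        refine (sqrt_sum_le _ _ fun i => by positivity).trans ?_
        apply Finset.sum_le_sum
        intro i _
        rw [Real.sqrt_inv]
      linarith
    have h2 : log (X z) = 2 * log (√(X z)) := by
      rw [Real.log_sqrt hX0.le]; ring
    have hsX : 0 < √(X z) := Real.sqrt_pos.2 hX0
    have h3 : log (√(X z)) ≤ √(X z) / c0 + log c0 := by
      have := Real.log_le_sub_one_of_pos (x := √(X z) / c0) (by positivity)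
      rw [log_div hsX.ne' hc01.ne'] at this
      linarith
    have h4 : √(X z) / c0 ≤ (√Y + S' z) / c0 := by gcongr
    have h5 : log (X z) ≤ 2 * ((√Y + S' z) / c0) + 2 * log c0 := by linarith
    have h6 : (d * d : ℝ) * log (X z) ≤ d * d * (2 * ((√Y + S' z) / c0) + 2 * log c0) := by gcongr
    have h7 : V z = log D + d * d * (2 * ((√Y + S' z) / c0) + 2 * log c0) := by
      simp only [V, smul_eq_mul]; ring
    rw [h7]
    push_cast
    linarith

open Real in
theorem jensen_compare {ι : Type*} [Fintype ι] {W : ℂ → ℂ} {g : ι → ℂ → ℂ} (hW : Differentiable ℂ W)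
    (hg : ∀ j, Differentiable ℂ (g j)) (hW0 : W 0 ≠ 0) (hg0 : ∀ j, g j 0 ≠ 0) (τ : ι → ℝ)
    (hord : ∀ w, ∑ j, τ j * (analyticOrderNatAt (g j) w : ℝ) ≤ analyticOrderNatAt W w)
    {r : ℝ} (hr : 0 < r) :
    ∑ j, τ j * (circleAverage (fun z => log ‖g j z‖) 0 r - log ‖g j 0‖) ≤
      circleAverage (fun z => log ‖W z‖) 0 r - log ‖W 0‖ := by
  classical
  have key : ∀ f : ℂ → ℂ, Differentiable ℂ f → f 0 ≠ 0 → ∃ S : Finset ℂ, (∀ u ∈ S, ‖u‖ ≤ r) ∧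
      ∀ S', S ⊆ S' → (∀ u ∈ S', ‖u‖ ≤ r) →
      circleAverage (fun z => log ‖f z‖) 0 r - log ‖f 0‖ =
        ∑ u ∈ S', (analyticOrderNatAt f u : ℝ) * log (r * ‖u‖⁻¹) := by
    intro f hf h0
    have han : AnalyticOnNhd ℂ f (Metric.closedBall 0 |r|) := fun z _ => hf.analyticAt z
    have hfin := (MeromorphicOn.divisor f (Metric.closedBall 0 |r|)).finiteSupport
      (isCompact_closedBall 0 |r|)
    refine ⟨hfin.toFinset, ?_, ?_⟩
    · intro u hu
      by_contra h
      have : u ∉ Metric.closedBall (0 : ℂ) |r| := by simpa [abs_of_pos hr] using h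
      simp [Function.locallyFinsuppWithin.apply_eq_zero_of_notMem _ this] at hu
    · intro S' hS hS'
      rw [han.circleAverage_log_norm hr.ne' h0, add_sub_cancel_right,
        finsum_eq_sum_of_support_subset (s := S')]
      · apply Finset.sum_congr rfl
        intro u hu
        rw [MeromorphicOn.divisor_apply han.meromorphicOn (by simpa [abs_of_pos hr] using hS' u hu)]
        rw [(hf.analyticAt u).meromorphicOrderAt_eq]
        have hne : analyticOrderAt f u ≠ ⊤ := by
          have h1 : AnalyticOnNhd ℂ f Set.univ := fun z _ => hf.analyticAt z
          intro h
          rw [analyticOrderAt_eq_top] at h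
          exact h0 (h1.eqOn_zero_of_preconnected_of_eventuallyEq_zero isPreconnected_univ
            (Set.mem_univ u) h (Set.mem_univ 0))
        rw [← Nat.cast_analyticOrderNatAt hne]
        simp
      · intro u hu
        apply hS
        rw [Set.Finite.mem_toFinset]
        intro h
        simp [h] at hu
  choose S hS1 hS2 using key
  set T : Finset ℂ := S W hW hW0 ∪ Finset.univ.biUnion fun j => S (g j) (hg j) (hg0 j) with hT
  have hTr : ∀ u ∈ T, ‖u‖ ≤ r := by
    intro u hu
    simp only [hT, Finset.mem_union, Finset.mem_biUnion, Finset.mem_univ, true_and] at hu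
    rcases hu with hu | ⟨j, hu⟩
    · exact hS1 _ _ _ u hu
    · exact hS1 _ _ _ u hu
  rw [hS2 W hW hW0 T Finset.subset_union_left hTr]
  have e1 : ∀ j, circleAverage (fun z => log ‖g j z‖) 0 r - log ‖g j 0‖ =
        ∑ u ∈ T, (analyticOrderNatAt (g j) u : ℝ) * log (r * ‖u‖⁻¹) := fun j =>
    hS2 _ (hg j) (hg0 j) T (((Finset.subset_biUnion_of_mem
      (fun j => S (g j) (hg j) (hg0 j)) (Finset.mem_univ j))).trans Finset.subset_union_right) hTr
  simp only [e1, Finset.mul_sum]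
  rw [Finset.sum_comm]
  apply Finset.sum_le_sum
  intro u hu
  simp only [← mul_assoc]
  rw [← Finset.sum_mul]
  apply mul_le_mul_of_nonneg_right (hord u)
  rcases eq_or_ne u 0 with rfl | hu0
  · simp
  · apply log_nonneg
    rw [← div_eq_mul_inv, one_le_div (norm_pos_iff.2 hu0)]
    exact hTr u hu

open Real in
theorem borel_growth (T : ℝ → ℝ) (hloc : ∀ R : ℝ, ∃ B : ℝ, ∀ r, 0 ≤ r → r ≤ R → T r ≤ B)
    {C : ℝ} (hlow : ∀ r, 1 ≤ r → log r - C ≤ T r) {A : ℝ} (hA : 1 ≤ A) :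
    ∃ r, 1 ≤ r ∧ A ≤ T r ∧ T ((1 + 1 / T r) * r) ≤ 2 * T r ∧ T ((1 + 1 / T r) ^ 2 * r) ≤ 2 * T r := by
  by_contra hcon
  push Not at hcon
  have step : ∀ r, 1 ≤ r → A ≤ T r → ∃ r', r ≤ r' ∧ r' ≤ r * exp (2 / T r) ∧ 2 * T r ≤ T r' := by
    intro r hr hAr
    have ht : 0 < T r := by linarith
    have h1 : 1 + 1 / T r ≤ exp (1 / T r) := by linarith [add_one_le_exp (1 / T r)]
    have h0 : 0 ≤ 1 / T r := by positivity
    have h2 : (1 + 1 / T r) ^ 2 ≤ exp (2 / T r) := by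
      calc (1 + 1 / T r) ^ 2 ≤ exp (1 / T r) ^ 2 := by gcongr
        _ = exp (2 / T r) := by rw [← exp_nat_mul]; congr 1; push_cast; ring
    have h3 : 1 + 1 / T r ≤ (1 + 1 / T r) ^ 2 := by nlinarith
    by_cases h : T ((1 + 1 / T r) * r) ≤ 2 * T r
    · refine ⟨(1 + 1 / T r) ^ 2 * r, ?_, ?_, (hcon r hr hAr h).le⟩
      · nlinarith
      · rw [mul_comm]; gcongr
    · refine ⟨(1 + 1 / T r) * r, ?_, ?_, (not_le.1 h).le⟩
      · nlinarith
      · rw [mul_comm]; gcongr; linarith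
  set r0 : ℝ := exp (max 0 (A + C)) with hr0
  have h10 : 1 ≤ r0 := one_le_exp (le_max_left _ _)
  have hT0 : A ≤ T r0 := by
    have h1 := hlow r0 h10
    rw [hr0, log_exp] at h1
    have := le_max_right 0 (A + C)
    linarith
  have seq : ∀ n : ℕ, ∃ r, 1 ≤ r ∧ r ≤ r0 * exp (4 - 4 / 2 ^ n) ∧ 2 ^ n * A ≤ T r := by
    intro n
    induction n with
    | zero => exact ⟨r0, h10, by simp, by simpa using hT0⟩
    | succ n ih =>
      obtain ⟨r, h1, h2, h3⟩ := ih
      have hp : (1 : ℝ) ≤ 2 ^ n := one_le_pow₀ (by norm_num)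
      have hAT : A ≤ T r := by nlinarith
      obtain ⟨r', h4, h5, h6⟩ := step r h1 hAT
      refine ⟨r', h1.trans h4, h5.trans ?_, ?_⟩
      · have h7 : 2 / T r ≤ 2 / 2 ^ n := by
          apply div_le_div_of_nonneg_left (by norm_num) (by positivity)
          nlinarith
        calc r * exp (2 / T r) ≤ (r0 * exp (4 - 4 / 2 ^ n)) * exp (2 / 2 ^ n) := by gcongr
          _ = r0 * exp (4 - 4 / 2 ^ (n + 1)) := by
            rw [mul_assoc, ← exp_add]
            congr 2
            rw [pow_succ]; field_simp; ring
      · rw [pow_succ]; nlinarith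
  obtain ⟨B, hB⟩ := hloc (r0 * exp 4)
  obtain ⟨n, hn⟩ := pow_unbounded_of_one_lt B (one_lt_two : (1 : ℝ) < 2)
  obtain ⟨r, h1, h2, h3⟩ := seq n
  have h4 := hB r (by linarith) (h2.trans (by gcongr; linarith [show (0 : ℝ) ≤ 4 / 2 ^ n by positivity]))
  have hp : (0 : ℝ) < 2 ^ n := by positivity
  nlinarith

open Real in
theorem growth_contra (T : ℝ → ℝ) (hloc : ∀ R : ℝ, ∃ B : ℝ, ∀ r, 0 ≤ r → r ≤ R → T r ≤ B)
    {C : ℝ} (hlow : ∀ r, 1 ≤ r → log r - C ≤ T r) {γ K C' : ℝ} (hγ : 0 < γ) (hK : 0 ≤ K)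
    (hmain : ∀ r ρ M : ℝ, 1 ≤ r → 1 < ρ → ρ ≤ 2 → 1 ≤ M → 2 * T (ρ * r) + C' ≤ M →
      T (ρ ^ 2 * r) + C' ≤ M → γ * T r ≤ K * (1 + log (M / (ρ - 1))) + C') : False := by
  set L := log (4 + |C'|) with hL
  have h1 : ∀ᶠ t : ℝ in Filter.atTop, ‖log t‖ ≤ (γ / (4 * (K + 1))) * ‖id t‖ :=
    isLittleO_log_id_atTop.bound (by positivity)
  have h2 : ∀ᶠ t : ℝ in Filter.atTop, (K * (1 + L) + C') / (γ / 2) < t :=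
    Filter.eventually_gt_atTop _
  obtain ⟨A, hA⟩ := Filter.eventually_atTop.1 (h1.and h2)
  obtain ⟨r, hr, hAr, h3, h4⟩ := borel_growth T hloc hlow (le_max_left 1 A)
  obtain ⟨h5, h6⟩ := hA (T r) ((le_max_right _ _).trans hAr)
  have ht : 1 ≤ T r := (le_max_left _ _).trans hAr
  set t := T r with htd
  have ht0 : 0 < t := by linarith
  have hab := le_abs_self C'
  have hab0 := abs_nonneg C'
  have h7 := hmain r (1 + 1 / t) (4 * t + |C'|) hr (by linarith [show 0 < 1 / t by positivity])
    (by have : 1 / t ≤ 1 := by rw [div_le_one ht0]; exact ht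
        linarith) (by linarith) (by linarith) (by linarith)
  have h8 : log ((4 * t + |C'|) / (1 + 1 / t - 1)) ≤ L + 2 * log t := by
    have e : (4 * t + |C'|) / (1 + 1 / t - 1) = (4 * t + |C'|) * t := by
      rw [add_sub_cancel_left]; field_simp
    rw [e, hL, ← log_rpow ht0, ← log_mul (by positivity) (by positivity)]
    apply log_le_log (by positivity)
    norm_num
    nlinarith [mul_nonneg (mul_nonneg hab0 ht0.le) (sub_nonneg.2 ht)]
  rw [norm_of_nonneg (log_nonneg ht), id, norm_of_nonneg ht0.le] at h5
  rw [div_lt_iff₀ (by positivity)] at h6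
  have h9 : K * (2 * log t) ≤ γ / 2 * t := by
    have h10 : 0 ≤ log t := log_nonneg ht
    calc K * (2 * log t) ≤ (K + 1) * (2 * (γ / (4 * (K + 1)) * t)) := by gcongr; linarith
      _ = γ / 2 * t := by field_simp; ring
  have h11 : K * (1 + log ((4 * t + |C'|) / (1 + 1 / t - 1))) ≤ K * (1 + (L + 2 * log t)) := by gcongr
  nlinarith

/-- The Cartan characteristic function (with the sup norm). -/
noncomputable def charT {d : ℕ} (F : Fin d → ℂ → ℂ) (r : ℝ) : ℝ :=
  Real.circleAverage (fun z => Real.log ‖(fun l => F l z : Fin d → ℂ)‖) 0 r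

theorem normF_cont {d : ℕ} {F : Fin d → ℂ → ℂ} (hF : ∀ l, Differentiable ℂ (F l)) :
    Continuous fun z => ‖(fun l => F l z : Fin d → ℂ)‖ :=
  (continuous_pi fun l => (hF l).continuous).norm

theorem normF_pos {d : ℕ} {F : Fin d → ℂ → ℂ} (hnz : ∀ z, ∃ l, F l z ≠ 0) (z : ℂ) :
    0 < ‖(fun l => F l z : Fin d → ℂ)‖ := by
  rw [norm_pos_iff]
  obtain ⟨l, hl⟩ := hnz z
  exact fun h => hl (congrFun h l)

theorem logF_cont {d : ℕ} {F : Fin d → ℂ → ℂ} (hF : ∀ l, Differentiable ℂ (F l))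
    (hnz : ∀ z, ∃ l, F l z ≠ 0) :
    Continuous fun z => Real.log ‖(fun l => F l z : Fin d → ℂ)‖ :=
  (normF_cont hF).log fun z => (normF_pos hnz z).ne'

theorem logF_int {d : ℕ} {F : Fin d → ℂ → ℂ} (hF : ∀ l, Differentiable ℂ (F l))
    (hnz : ∀ z, ∃ l, F l z ≠ 0) (r : ℝ) :
    CircleIntegrable (fun z => Real.log ‖(fun l => F l z : Fin d → ℂ)‖) 0 r :=
  (logF_cont hF hnz).continuousOn.circleIntegrable'

theorem charT_bdd {d : ℕ} {F : Fin d → ℂ → ℂ} (hF : ∀ l, Differentiable ℂ (F l))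
    (hnz : ∀ z, ∃ l, F l z ≠ 0) (R : ℝ) :
    ∃ B : ℝ, ∀ r, 0 ≤ r → r ≤ R → charT F r ≤ B := by
  obtain ⟨B, hB⟩ := (isCompact_closedBall (0 : ℂ) R).bddAbove_image
    (logF_cont hF hnz).continuousOn
  refine ⟨B, fun r h0 hr => ?_⟩
  refine Real.circleAverage_mono_on_of_le_circle (logF_int hF hnz r) ?_
  intro z hz
  apply hB
  refine ⟨z, ?_, rfl⟩
  simp only [mem_sphere_iff_norm, sub_zero, abs_of_nonneg h0] at hz
  simp [hz, hr]

theorem lin_le {d : ℕ} (b : Fin d → ℂ) (v : Fin d → ℂ) :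
    ‖∑ l, b l * v l‖ ≤ (∑ l, ‖b l‖) * ‖v‖ := by
  refine (norm_sum_le _ _).trans ?_
  rw [Finset.sum_mul]
  apply Finset.sum_le_sum
  intro l _
  rw [norm_mul]
  gcongr
  exact norm_le_pi_norm v l

open Real in
theorem charT_up {d : ℕ} {F : Fin d → ℂ → ℂ} (hF : ∀ l, Differentiable ℂ (F l))
    (hnz : ∀ z, ∃ l, F l z ≠ 0) (v : Fin d → ℂ) {x : ℂ} (hx : ∑ l, v l * F l x ≠ 0)
    {r : ℝ} (hr0 : 0 < r) :
    circleAverage (fun z => log ‖∑ l, v l * F l z‖) 0 r ≤ log (∑ l, ‖v l‖) + charT F r := by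
  set G : ℂ → ℂ := fun z => ∑ l, v l * F l z with hG
  have dG : Differentiable ℂ G := by fun_prop
  set C1 := ∑ l, ‖v l‖ with hC1
  have hC1p : 0 < C1 := by
    by_contra h
    have h1 : C1 = 0 := le_antisymm (not_lt.1 h) (Finset.sum_nonneg fun _ _ => norm_nonneg _)
    rw [hC1, Finset.sum_eq_zero_iff_of_nonneg fun _ _ => norm_nonneg _] at h1
    apply hx
    apply Finset.sum_eq_zero
    intro l _
    rw [norm_eq_zero.1 (h1 l (Finset.mem_univ l)), zero_mul]
  have h5 : log C1 + charT F r =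
      circleAverage (fun z => log C1 + log ‖(fun l => F l z : Fin d → ℂ)‖) 0 r := by
    rw [circleAverage_fun_add (circleIntegrable_const _ _ _) (logF_int hF hnz r),
      circleAverage_const]; rfl
  rw [h5]
  apply circleAverage_mono_codisc hr0.ne' (circInt_log dG r)
    ((circleIntegrable_const _ _ _).add (logF_int hF hnz r))
  filter_upwards [codisc_ne dG hx (Metric.sphere 0 |r|)] with z hz _
  show log ‖G z‖ ≤ log C1 + log ‖(fun l => F l z : Fin d → ℂ)‖
  rw [← log_mul hC1p.ne' (normF_pos hnz z).ne']
  apply log_le_log (norm_pos_iff.2 hz)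
  exact lin_le v _

open Real in
theorem charT_low {d : ℕ} {F : Fin d → ℂ → ℂ} (hF : ∀ l, Differentiable ℂ (F l))
    (hnz : ∀ z, ∃ l, F l z ≠ 0) (hd : 2 ≤ d) (hli : LinearIndependent ℂ F) :
    ∃ C : ℝ, ∀ r, 1 ≤ r → log r - C ≤ charT F r := by
  -- a nontrivial combination vanishing at the origin
  obtain ⟨v, hv0, hv⟩ : ∃ v : Fin d → ℂ, v ≠ 0 ∧ ∑ l, v l * F l 0 = 0 := by
    let L : (Fin d → ℂ) →ₗ[ℂ] ℂ := Fintype.linearCombination ℂ (fun l => F l 0)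
    have hk : L.ker ≠ ⊥ := by
      apply LinearMap.ker_ne_bot_of_finrank_lt
      simp; omega
    obtain ⟨v, hv, hv0⟩ := Submodule.exists_mem_ne_zero_of_ne_bot hk
    refine ⟨v, hv0, ?_⟩
    rw [LinearMap.mem_ker] at hv
    simpa [L, Fintype.linearCombination_apply] using hv
  set G : ℂ → ℂ := fun z => ∑ l, v l * F l z with hG
  have dG : Differentiable ℂ G := by fun_prop
  obtain ⟨x, hx⟩ : ∃ x, G x ≠ 0 := by
    by_contra hcon
    push Not at hcon
    apply hv0
    funext l
    refine Fintype.linearIndependent_iff.1 hli v ?_ l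
    funext z
    simpa [hG] using hcon z
  set C1 := ∑ l, ‖v l‖ with hC1
  refine ⟨log C1 - log ‖meromorphicTrailingCoeffAt G 0‖, fun r hr => ?_⟩
  have hr0 : 0 < r := by linarith
  have han : AnalyticOnNhd ℂ G (Metric.closedBall 0 |r|) := fun z _ => dG.analyticAt z
  have h1 := MeromorphicOn.circleAverage_log_norm hr0.ne' han.meromorphicOn
  have h2 : 0 ≤ ∑ᶠ (u : ℂ), ((MeromorphicOn.divisor G (Metric.closedBall 0 |r|)) u : ℝ) *
      log (r * ‖0 - u‖⁻¹) := by
    apply finsum_nonneg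
    intro u
    by_cases hu : u ∈ Metric.closedBall (0 : ℂ) |r|
    · apply mul_nonneg
      · exact_mod_cast MeromorphicOn.AnalyticOnNhd.divisor_nonneg han u
      · rcases eq_or_ne u 0 with rfl | hu0
        · simp
        · apply log_nonneg
          have h1 : ‖u‖ ≤ r := by simpa [abs_of_pos hr0] using hu
          have h2 : 0 < ‖u‖ := norm_pos_iff.2 hu0
          rw [zero_sub, norm_neg, ← div_eq_mul_inv, le_div_iff₀ h2]; linarith
    · rw [Function.locallyFinsuppWithin.apply_eq_zero_of_notMem _ hu]; simp
  have h3 : (1 : ℝ) ≤ (MeromorphicOn.divisor G (Metric.closedBall 0 |r|)) 0 := by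
    rw [MeromorphicOn.divisor_apply han.meromorphicOn (by simp),
      (dG.analyticAt 0).meromorphicOrderAt_eq]
    have hne : analyticOrderAt G 0 ≠ ⊤ := by
      have h1 : AnalyticOnNhd ℂ G Set.univ := fun z _ => dG.analyticAt z
      intro h
      rw [analyticOrderAt_eq_top] at h
      exact hx (h1.eqOn_zero_of_preconnected_of_eventuallyEq_zero isPreconnected_univ
        (Set.mem_univ 0) h (Set.mem_univ x))
    have hne0 : analyticOrderAt G 0 ≠ 0 := by
      rw [(dG.analyticAt 0).analyticOrderAt_ne_zero]
      exact hv
    rw [← Nat.cast_analyticOrderNatAt hne] at hne0 ⊢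
    have : 1 ≤ analyticOrderNatAt G 0 := Nat.one_le_iff_ne_zero.2 (by simpa using hne0)
    simpa using this
  have h4 : circleAverage (fun z => log ‖G z‖) 0 r ≤ log C1 + charT F r :=
    charT_up hF hnz v hx hr0
  have h6 : log r ≤ (MeromorphicOn.divisor G (Metric.closedBall 0 |r|)) 0 * log r := by
    have := log_nonneg hr
    nlinarith
  linarith

theorem zero_card {ι : Type*} [DecidableEq ι] [Fintype ι] {d n : ℕ} {b : ι → Fin d → ℂ}
    (hspan : ∀ A : Finset ι, A.card = n + 1 → Submodule.span ℂ (b '' (A : Set ι)) = ⊤)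
    (hq : n + 1 ≤ Fintype.card ι) {δ : ℝ} {v : Fin d → ℂ}
    (h : ∀ A : Finset ι, A.card = n + 1 → ∃ j ∈ A, δ * ‖v‖ ≤ ‖∑ i, b j i * v i‖) :
    ∃ R : Finset ι, R.card = n + 1 ∧ ∀ j, j ∉ R → δ * ‖v‖ ≤ ‖∑ i, b j i * v i‖ := by
  classical
  set Z : Finset ι := Finset.univ.filter fun j => ¬ δ * ‖v‖ ≤ ‖∑ i, b j i * v i‖ with hZ
  have hZc : Z.card ≤ n + 1 := by
    by_contra hc
    obtain ⟨A, hA, hAc⟩ := Finset.exists_subset_card_eq (show n + 1 ≤ Z.card by omega)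
    obtain ⟨j, hj, hj2⟩ := h A hAc
    have := hA hj
    simp only [hZ, Finset.mem_filter] at this
    exact this.2 hj2
  obtain ⟨R, hZR, -, hR⟩ := Finset.exists_subsuperset_card_eq (Finset.subset_univ Z) hZc
    (by simpa using hq)
  refine ⟨R, hR, fun j hj => ?_⟩
  by_contra hcon
  exact hj (hZR (by simp only [hZ, Finset.mem_filter, Finset.mem_univ, true_and]; exact hcon))

theorem order_ineq {ι : Type*} [DecidableEq ι] [Fintype ι] {d n : ℕ} {b : ι → Fin d → ℂ}
    (hspan : ∀ A : Finset ι, A.card = n + 1 → Submodule.span ℂ (b '' (A : Set ι)) = ⊤)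
    (hq : n + 1 ≤ Fintype.card ι) {F : Fin d → ℂ → ℂ} (hF : ∀ l, Differentiable ℂ (F l))
    (hnz : ∀ z, ∃ l, F l z ≠ 0) {ω τ : ι → ℝ}
    (hN : ∀ R : Finset ι, R.card = n + 1 → ∀ x : ι → ℝ, (∀ j ∈ R, 0 ≤ x j) →
        ∃ e : Fin d → ι, (∀ i, e i ∈ R) ∧ (Matrix.of fun i => b (e i)).det ≠ 0 ∧
          ∑ j ∈ R, ω j * x j ≤ ∑ i, x (e i))
    {x₀ : ℂ} (hW : wron F x₀ ≠ 0) (hg : ∀ j, ∃ x, ∑ l, b j l * F l x ≠ 0)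
    (w : ℂ)
    (hτ : ∀ j, τ j * (analyticOrderNatAt (fun z => ∑ l, b j l * F l z) w : ℝ) ≤
      ω j * ((analyticOrderNatAt (fun z => ∑ l, b j l * F l z) w - (d - 1) : ℕ) : ℝ)) :
    ∑ j, τ j * (analyticOrderNatAt (fun z => ∑ l, b j l * F l z) w : ℝ) ≤
      analyticOrderNatAt (wron F) w := by
  obtain ⟨δ, hδ, hδ2⟩ := exists_delta b hspan
  obtain ⟨R, hR, hR2⟩ := zero_card hspan hq (fun A hA => hδ2 A hA (fun l => F l w))
  have hv := normF_pos hnz w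
  set g : ι → ℂ → ℂ := fun j z => ∑ l, b j l * F l z with hgd
  have dg : ∀ j, Differentiable ℂ (g j) := fun j => by simp only [hgd]; fun_prop
  have finord : ∀ f : ℂ → ℂ, (∀ z, AnalyticAt ℂ f z) → ∀ x, f x ≠ 0 → analyticOrderAt f w ≠ ⊤ := by
    intro f hf x hx h
    have h1 : AnalyticOnNhd ℂ f Set.univ := fun z _ => hf z
    rw [analyticOrderAt_eq_top] at h
    exact hx (h1.eqOn_zero_of_preconnected_of_eventuallyEq_zero isPreconnected_univ
      (Set.mem_univ w) h (Set.mem_univ x))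
  obtain ⟨e, heR, hdet, hsum⟩ := hN R hR
    (fun j => ((analyticOrderNatAt (g j) w - (d - 1) : ℕ) : ℝ)) (fun j _ => by positivity)
  have h1 : ∑ j, ω j * ((analyticOrderNatAt (g j) w - (d - 1) : ℕ) : ℝ) =
      ∑ j ∈ R, ω j * ((analyticOrderNatAt (g j) w - (d - 1) : ℕ) : ℝ) := by
    symm
    apply Finset.sum_subset (Finset.subset_univ R)
    intro j _ hj
    have h2 := hR2 j hj
    have h3 : g j w ≠ 0 := by
      rw [← norm_pos_iff]
      exact lt_of_lt_of_le (by positivity) h2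
    have h4 : analyticOrderAt (g j) w = 0 := by
      by_contra h
      rw [← ne_eq, ((dg j).analyticAt w).analyticOrderAt_ne_zero] at h
      exact h3 h
    simp [analyticOrderNatAt, h4]
  have hWa : ∀ z, AnalyticAt ℂ (wron F) z := fun z => wron_analyticAt fun i => (hF i).analyticAt z
  have h5 := wron_order (F := fun i => g (e i)) (w := w) (fun i => (dg (e i)).analyticAt w)
    (fun i => analyticOrderNatAt (g (e i)) w) (fun i => by
      obtain ⟨x, hx⟩ := hg (e i)
      rw [Nat.cast_analyticOrderNatAt (finord (g (e i)) (fun z => (dg _).analyticAt z) x hx)])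
  have h6 : wron (fun i => g (e i)) =
      (fun _ => (Matrix.of fun i => b (e i)).det) * wron F := by
    funext z
    exact wron_linear F z (fun i => (hF i).analyticAt z) (Matrix.of fun i => b (e i))
  rw [h6, analyticOrderAt_mul analyticAt_const (hWa w)] at h5
  have h7 : analyticOrderAt (fun _ : ℂ => (Matrix.of fun i => b (e i)).det) w = 0 := by
    by_contra h
    rw [← ne_eq, analyticAt_const.analyticOrderAt_ne_zero] at h
    exact hdet h
  rw [h7, zero_add, ← Nat.cast_analyticOrderNatAt (finord _ hWa _ hW), Nat.cast_le] at h5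
  calc _ ≤ ∑ j, ω j * ((analyticOrderNatAt (g j) w - (d - 1) : ℕ) : ℝ) :=
        Finset.sum_le_sum fun j _ => hτ j
    _ ≤ _ := h1.le.trans hsum
    _ ≤ _ := by exact_mod_cast h5

theorem circleAverage_scale (h : ℂ → ℝ) (r ρ : ℝ) :
    Real.circleAverage (fun z => h (r * z)) 0 ρ = Real.circleAverage h 0 (ρ * r) := by
  unfold Real.circleAverage
  congr 2
  funext θ
  simp only [circleMap, zero_add, Complex.ofReal_mul]
  congr 1
  ring

open Real in
theorem pointwise_bound {ι : Type*} [DecidableEq ι] [Fintype ι] {d n : ℕ} {b : ι → Fin d → ℂ}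
    (hspan : ∀ A : Finset ι, A.card = n + 1 → Submodule.span ℂ (b '' (A : Set ι)) = ⊤)
    (hq : n + 1 ≤ Fintype.card ι) {ω τ : ι → ℝ} (hω : ∀ j, 0 ≤ ω j) (hτω : ∀ j, τ j ≤ ω j)
    (hN : ∀ R : Finset ι, R.card = n + 1 → ∀ x : ι → ℝ, (∀ j ∈ R, 0 ≤ x j) →
        ∃ e : Fin d → ι, (∀ i, e i ∈ R) ∧ (Matrix.of fun i => b (e i)).det ≠ 0 ∧
          ∑ j ∈ R, ω j * x j ≤ ∑ i, x (e i))
    {B : ℝ} (hB1 : 1 ≤ B) (hB : ∀ j (v : Fin d → ℂ), ‖∑ l, b j l * v l‖ ≤ B * ‖v‖) :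
    ∃ C2 : ℝ, ∀ v : Fin d → ℂ, v ≠ 0 → (∀ j, ∑ l, b j l * v l ≠ 0) →
      ∃ e : Fin d → ι, (Matrix.of fun i => b (e i)).det ≠ 0 ∧
        (∑ j, τ j - d) * log ‖v‖ - ∑ j, τ j * log ‖∑ l, b j l * v l‖ ≤
          C2 - ∑ i, log ‖∑ l, b (e i) l * v l‖ := by
  obtain ⟨δ, hδ, hδ2⟩ := exists_delta b hspan
  refine ⟨(∑ j, ω j) * |log B - log δ| + d * log B - (∑ j, τ j) * log B, fun v hv hg => ?_⟩
  obtain ⟨R, hR, hR2⟩ := zero_card hspan hq (fun A hA => hδ2 A hA v)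
  have hv0 : 0 < ‖v‖ := norm_pos_iff.2 hv
  set t := log ‖v‖ with ht
  set y : ι → ℝ := fun j => log ‖∑ l, b j l * v l‖ with hy
  set x : ι → ℝ := fun j => log B + t - y j with hx
  have hx0 : ∀ j, 0 ≤ x j := by
    intro j
    have := log_le_log (norm_pos_iff.2 (hg j)) (hB j v)
    rw [log_mul (by positivity) hv0.ne'] at this
    simp only [hx, hy]; linarith
  obtain ⟨e, heR, hdet, hsum⟩ := hN R hR x (fun j _ => hx0 j)
  refine ⟨e, hdet, ?_⟩
  have h1 : ∑ j, τ j * x j ≤ ∑ i, x (e i) + (∑ j, ω j) * |log B - log δ| := by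
    calc ∑ j, τ j * x j ≤ ∑ j, ω j * x j :=
          Finset.sum_le_sum fun j _ => mul_le_mul_of_nonneg_right (hτω j) (hx0 j)
      _ = ∑ j ∈ R, ω j * x j + ∑ j ∈ Rᶜ, ω j * x j := (Finset.sum_add_sum_compl R _).symm
      _ ≤ ∑ i, x (e i) + (∑ j, ω j) * |log B - log δ| := by
        apply add_le_add hsum
        calc ∑ j ∈ Rᶜ, ω j * x j ≤ ∑ j ∈ Rᶜ, ω j * |log B - log δ| := by
              apply Finset.sum_le_sum
              intro j hj
              apply mul_le_mul_of_nonneg_left _ (hω j)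
              have h2 := hR2 j (by simpa using hj)
              have h3 := log_le_log (by positivity) h2
              rw [log_mul hδ.ne' hv0.ne'] at h3
              refine le_trans ?_ (le_abs_self _)
              simp only [hx, hy]; linarith
          _ ≤ ∑ j, ω j * |log B - log δ| :=
              Finset.sum_le_sum_of_subset_of_nonneg (Finset.subset_univ _) fun j _ _ =>
                mul_nonneg (hω j) (abs_nonneg _)
          _ = _ := by rw [Finset.sum_mul]
  have h2 : ∑ j, τ j * x j = (∑ j, τ j) * (log B + t) - ∑ j, τ j * y j := by
    rw [Finset.sum_mul, ← Finset.sum_sub_distrib]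
    exact Finset.sum_congr rfl fun j _ => by simp only [hx]; ring
  have h3 : ∑ i, x (e i) = d * (log B + t) - ∑ i, y (e i) := by
    simp only [hx, Finset.sum_sub_distrib, Finset.sum_const, Finset.card_univ, Fintype.card_fin,
      nsmul_eq_mul]
  rw [h2, h3] at h1
  linarith

open Real in
theorem main_ineq {ι : Type*} [DecidableEq ι] [Fintype ι] {d n : ℕ} {b : ι → Fin d → ℂ}
    (hspan : ∀ A : Finset ι, A.card = n + 1 → Submodule.span ℂ (b '' (A : Set ι)) = ⊤)
    (hq : n + 1 ≤ Fintype.card ι) (hd : 0 < d)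
    {F : Fin d → ℂ → ℂ} (hF : ∀ l, Differentiable ℂ (F l))
    (hnz : ∀ z, ∃ l, F l z ≠ 0) {ω τ : ι → ℝ} (hω : ∀ j, 0 ≤ ω j) (hτω : ∀ j, τ j ≤ ω j)
    (hN : ∀ R : Finset ι, R.card = n + 1 → ∀ x : ι → ℝ, (∀ j ∈ R, 0 ≤ x j) →
        ∃ e : Fin d → ι, (∀ i, e i ∈ R) ∧ (Matrix.of fun i => b (e i)).det ≠ 0 ∧
          ∑ j ∈ R, ω j * x j ≤ ∑ i, x (e i))
    (hW0 : wron F 0 ≠ 0) (hg0 : ∀ j, ∑ l, b j l * F l 0 ≠ 0)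
    (hord : ∀ w, ∑ j, τ j * (analyticOrderNatAt (fun z => ∑ l, b j l * F l z) w : ℝ) ≤
      analyticOrderNatAt (wron F) w) :
    ∃ K C' : ℝ, 0 ≤ K ∧ ∀ r ρ M : ℝ, 1 ≤ r → 1 < ρ → ρ ≤ 2 → 1 ≤ M →
      2 * charT F (ρ * r) + C' ≤ M → charT F (ρ ^ 2 * r) + C' ≤ M →
      (∑ j, τ j - d) * charT F r ≤ K * (1 + log (M / (ρ - 1))) + C' := by
  classical
  set g : ι → ℂ → ℂ := fun j z => ∑ l, b j l * F l z with hgd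
  have dg : ∀ j, Differentiable ℂ (g j) := fun j => by simp only [hgd]; fun_prop
  have dW : Differentiable ℂ (wron F) := fun z =>
    (wron_analyticAt fun i => (hF i).analyticAt z).differentiableAt
  set B : ℝ := 1 + ∑ j, ∑ l, ‖b j l‖ with hBd
  have hsn : ∀ j, 0 ≤ ∑ l, ‖b j l‖ := fun j => Finset.sum_nonneg fun _ _ => norm_nonneg _
  have hB1 : 1 ≤ B := by
    have : 0 ≤ ∑ j, ∑ l, ‖b j l‖ := Finset.sum_nonneg fun j _ => hsn j
    linarith
  have hBj : ∀ j, ∑ l, ‖b j l‖ ≤ B := fun j => by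
    have := Finset.single_le_sum (f := fun j => ∑ l, ‖b j l‖) (fun j _ => hsn j) (Finset.mem_univ j)
    linarith
  have hB : ∀ j (v : Fin d → ℂ), ‖∑ l, b j l * v l‖ ≤ B * ‖v‖ := fun j v =>
    (lin_le (b j) v).trans (by gcongr; exact hBj j)
  obtain ⟨C2, hC2⟩ := pointwise_bound hspan hq hω hτω hN hB1 hB
  obtain ⟨K, hK, hldl⟩ := ldl (ι := ι) hd
  set C3 : ℝ := ∑ e : Fin d → ι, |log ‖(Matrix.of fun i => b (e i)).det‖| with hC3
  have hC3e : ∀ e : Fin d → ι, |log ‖(Matrix.of fun i => b (e i)).det‖| ≤ C3 := fun e =>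
    Finset.single_le_sum (f := fun e : Fin d → ι => |log ‖(Matrix.of fun i => b (e i)).det‖|)
      (fun _ _ => abs_nonneg _) (Finset.mem_univ e)
  set C4 : ℝ := ∑ j, |log ‖g j 0‖| with hC4
  have hC4j : ∀ j, |log ‖g j 0‖| ≤ C4 := fun j =>
    Finset.single_le_sum (f := fun j => |log ‖g j 0‖|) (fun _ _ => abs_nonneg _) (Finset.mem_univ j)
  have hC40 : 0 ≤ C4 := Finset.sum_nonneg fun _ _ => abs_nonneg _
  have hlB : 0 ≤ log B := log_nonneg hB1
  set C5 : ℝ := C2 + C3 - log ‖wron F 0‖ + ∑ j, τ j * log ‖g j 0‖ with hC5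
  set C' : ℝ := 2 * log B + 2 * C4 + |C5| with hC'
  have hup : ∀ j (r : ℝ), 0 < r → circleAverage (fun z => log ‖g j z‖) 0 r ≤ log B + charT F r := by
    intro j r hr
    have h1 := charT_up hF hnz (b j) (hg0 j) hr
    have h2 : log (∑ l, ‖b j l‖) ≤ log B := by
      rcases (hsn j).eq_or_lt with h | h
      · rw [← h, log_zero]; exact hlB
      · exact log_le_log h (hBj j)
    linarith
  refine ⟨K, C', hK, ?_⟩
  intro r ρ M hr hρ1 hρ2 hM1 hM2 hM3
  have hr0 : 0 < r := by linarith
  have hρ0 : 0 < ρ := by linarith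
  have hab := abs_nonneg C5
  obtain ⟨V, hVi, hVa, hV⟩ := hldl (fun j z => g j (r * z)) ρ M
    (fun j => (dg j).comp (by fun_prop)) (fun j => by simpa using hg0 j) hρ1 hρ2 hM1 (by
      intro i j
      rw [circleAverage_scale (fun z => |log ‖g i z‖ - log ‖g j z‖|) r ρ]
      have hρr : 0 < ρ * r := by positivity
      have i1 := circInt_log (dg i) (ρ * r)
      have i2 := circInt_log (dg j) (ρ * r)
      have iF := logF_int hF hnz (ρ * r)
      have iB : CircleIntegrable (fun z => 2 * log B + (2 : ℝ) • log ‖(fun l => F l z : Fin d → ℂ)‖) 0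
        (ρ * r) := (circleIntegrable_const _ _ _).add (CircleIntegrable.const_smul iF)
      have iS : CircleIntegrable (fun z => log ‖g i z‖ + log ‖g j z‖) 0 (ρ * r) := i1.add i2
      have h1 : circleAverage (fun z => |log ‖g i z‖ - log ‖g j z‖|) 0 (ρ * r) ≤
          circleAverage (fun z => (2 * log B + (2 : ℝ) • log ‖(fun l => F l z : Fin d → ℂ)‖) -
            (log ‖g i z‖ + log ‖g j z‖)) 0 (ρ * r) := by
        apply circleAverage_mono_codisc hρr.ne' (i1.sub i2).abs (iB.sub iS)
        filter_upwards [codisc_ne (dg i) (hg0 i) (Metric.sphere 0 |ρ * r|),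
          codisc_ne (dg j) (hg0 j) (Metric.sphere 0 |ρ * r|)] with z hz1 hz2 _
        have hz := normF_pos hnz z
        have a1 := log_le_log (norm_pos_iff.2 hz1) (hB i (fun l => F l z))
        have a2 := log_le_log (norm_pos_iff.2 hz2) (hB j (fun l => F l z))
        rw [log_mul (by positivity) hz.ne'] at a1 a2
        show |log ‖g i z‖ - log ‖g j z‖| ≤
          (2 * log B + (2 : ℝ) • log ‖(fun l => F l z : Fin d → ℂ)‖) - (log ‖g i z‖ + log ‖g j z‖)
        rw [smul_eq_mul, abs_le]
        constructor <;> linarith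
      rw [circleAverage_fun_sub iB iS, circleAverage_fun_add i1 i2] at h1
      have iF2 : CircleIntegrable (fun z => (2 : ℝ) • log ‖(fun l => F l z : Fin d → ℂ)‖) 0
        (ρ * r) := CircleIntegrable.const_smul iF
      rw [circleAverage_fun_add (circleIntegrable_const _ _ _) iF2, circleAverage_const,
        circleAverage_fun_smul, smul_eq_mul] at h1
      have j1 := jensen_le (dg i) (hg0 i) hρr
      have j2 := jensen_le (dg j) (hg0 j) hρr
      have k1 := (neg_abs_le (log ‖g i 0‖))
      have k2 := (neg_abs_le (log ‖g j 0‖))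
      have l1 := hC4j i
      have l2 := hC4j j
      change _ ≤ 2 * log B + 2 * charT F (ρ * r) - _ at h1
      linarith) (by
      intro j
      rw [circleAverage_scale (fun z => log ‖g j z‖) r (ρ ^ 2)]
      have h1 := hup j (ρ ^ 2 * r) (by positivity)
      have k1 := (neg_abs_le (log ‖g j 0‖))
      have l1 := hC4j j
      simp only [mul_zero]
      linarith)
  -- the averaged estimate
  set Fr : ℂ → ℝ := fun z => log ‖(fun l => F l (r * z) : Fin d → ℂ)‖ with hFr
  set γ : ℝ := ∑ j, τ j - d with hγ
  have iFr : CircleIntegrable Fr 0 1 :=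
    logF_int (F := fun l z => F l (r * z)) (fun l => (hF l).comp (by fun_prop))
      (fun z => hnz (r * z)) 1
  have dWr : Differentiable ℂ fun z => wron F (r * z) := dW.comp (by fun_prop)
  have dgr : ∀ j, Differentiable ℂ fun z => g j (r * z) := fun j => (dg j).comp (by fun_prop)
  have iW := circInt_log dWr 1
  have ig : ∀ j, CircleIntegrable (fun z => τ j • log ‖g j (r * z)‖) 0 1 := fun j =>
    CircleIntegrable.const_smul (circInt_log (dgr j) 1)
  have iγ : CircleIntegrable (fun z => γ • Fr z) 0 1 := CircleIntegrable.const_smul iFr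
  have iγW : CircleIntegrable (fun z => γ • Fr z + log ‖wron F (r * z)‖) 0 1 := iγ.add iW
  have iS : CircleIntegrable (fun z => ∑ j, τ j • log ‖g j (r * z)‖) 0 1 :=
    CircleIntegrable.fun_sum _ fun j _ => ig j
  have iCV : CircleIntegrable (fun z => (C2 + C3) + V z) 0 1 := (circleIntegrable_const _ _ _).add hVi
  have h1 : circleAverage (fun z => (γ • Fr z + log ‖wron F (r * z)‖) -
      ∑ j, τ j • log ‖g j (r * z)‖) 0 1 ≤ circleAverage (fun z => (C2 + C3) + V z) 0 1 := by
    apply circleAverage_mono_codisc one_ne_zero (iγW.sub iS) iCV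
    have e1 := codisc_ne dWr (x := 0) (by simpa using hW0) (Metric.sphere 0 |1|)
    have e2 : ∀ᶠ z in Filter.codiscreteWithin (Metric.sphere (0 : ℂ) |1|), ∀ j, g j (r * z) ≠ 0 :=
      Filter.eventually_all.2 fun j =>
        codisc_ne (dgr j) (x := 0) (by simpa using hg0 j) (Metric.sphere 0 |1|)
    filter_upwards [e1, e2] with z hz1 hz2 hz3
    rw [abs_one] at hz3
    show γ • Fr z + log ‖wron F (r * z)‖ - ∑ j, τ j • log ‖g j (r * z)‖ ≤ (C2 + C3) + V z
    have hvne : (fun l => F l (r * z) : Fin d → ℂ) ≠ 0 := norm_pos_iff.1 (normF_pos hnz (r * z))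
    obtain ⟨e, hdet, he⟩ := hC2 (fun l => F l (r * z)) hvne hz2
    have h3 := hV z hz3 hz2 e
    rw [wron_scale (F := fun i => g (e i)) (fun i => dg (e i)) r z] at h3
    have h4 : wron (fun i => g (e i)) (r * z) =
        (Matrix.of fun i => b (e i)).det * wron F (r * z) :=
      wron_linear F (r * z) (fun i => (hF i).analyticAt _) (Matrix.of fun i => b (e i))
    rw [h4, norm_mul, norm_mul] at h3
    have hdn : 0 < ‖(Matrix.of fun i => b (e i)).det‖ := norm_pos_iff.2 hdet
    have hWn : 0 < ‖wron F (r * z)‖ := norm_pos_iff.2 hz1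
    have h5 : ‖(Matrix.of fun i => b (e i)).det‖ * ‖wron F (r * z)‖ ≤
        exp (V z) * ∏ i, ‖g (e i) (r * z)‖ := by
      refine le_trans ?_ h3
      apply le_mul_of_one_le_left (by positivity)
      rw [norm_pow, Complex.norm_real, norm_of_nonneg hr0.le]
      exact one_le_pow₀ hr
    have h6 := log_le_log (by positivity) h5
    have hprod : (∏ i, ‖g (e i) (r * z)‖) ≠ 0 :=
      Finset.prod_ne_zero_iff.2 fun i _ => norm_ne_zero_iff.2 (hz2 (e i))
    rw [log_mul hdn.ne' hWn.ne', log_mul (exp_pos _).ne' hprod, log_exp,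
      log_prod (fun i _ => norm_ne_zero_iff.2 (hz2 (e i)))] at h6
    have h7 := hC3e e
    have h8 := neg_abs_le (log ‖(Matrix.of fun i => b (e i)).det‖)
    simp only [smul_eq_mul]
    change γ * Fr z - ∑ j, τ j * log ‖g j (r * z)‖ ≤ C2 - ∑ i, log ‖g (e i) (r * z)‖ at he
    linarith
  rw [circleAverage_fun_sub iγW iS, circleAverage_fun_add iγ iW, circleAverage_fun_sum fun j _ => ig j,
    circleAverage_fun_add (circleIntegrable_const _ _ _) hVi, circleAverage_const,
    circleAverage_fun_smul] at h1
  have s1 : circleAverage Fr 0 1 = charT F r := by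
    rw [hFr, circleAverage_scale (fun z => log ‖(fun l => F l z : Fin d → ℂ)‖) r 1, one_mul]; rfl
  have s2 : circleAverage (fun z => log ‖wron F (r * z)‖) 0 1 =
      circleAverage (fun z => log ‖wron F z‖) 0 r := by
    rw [circleAverage_scale (fun z => log ‖wron F z‖) r 1, one_mul]
  have s3 : ∀ j, circleAverage (fun z => τ j • log ‖g j (r * z)‖) 0 1 =
      τ j * circleAverage (fun z => log ‖g j z‖) 0 r := by
    intro j
    rw [circleAverage_fun_smul, circleAverage_scale (fun z => log ‖g j z‖) r 1, one_mul, smul_eq_mul]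
  rw [s1, s2, Finset.sum_congr rfl fun j _ => s3 j, smul_eq_mul] at h1
  have h9 := jensen_compare dW dg hW0 hg0 τ hord hr0
  simp only [mul_sub, Finset.sum_sub_distrib] at h9
  have h10 := le_abs_self C5
  linarith

theorem entire_ord_ne_top {f : ℂ → ℂ} (hf : ∀ z, AnalyticAt ℂ f z) {x : ℂ} (hx : f x ≠ 0) (w : ℂ) :
    analyticOrderAt f w ≠ ⊤ := by
  intro h
  have h1 : AnalyticOnNhd ℂ f Set.univ := fun z _ => hf z
  rw [analyticOrderAt_eq_top] at h
  exact hx (h1.eqOn_zero_of_preconnected_of_eventuallyEq_zero isPreconnected_univ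
    (Set.mem_univ w) h (Set.mem_univ x))

theorem entire_ne_near {f : ℂ → ℂ} (hf : ∀ z, AnalyticAt ℂ f z) {x : ℂ} (hx : f x ≠ 0) :
    ∀ᶠ z in nhdsWithin (0 : ℂ) {0}ᶜ, f z ≠ 0 := by
  rcases (hf 0).eventually_eq_zero_or_eventually_ne_zero with h | h
  · exact absurd (analyticOrderAt_eq_top.2 h) (entire_ord_ne_top hf hx 0)
  · exact h

theorem mult_ineq {g : ℂ → ℂ} (hg : Differentiable ℂ g) {x : ℂ} (hx : g x ≠ 0) {m : ℕ∞}
    (hm : m ≠ 0)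
    (hint : ∀ z, g z = 0 → ∀ l : ℕ, (l : ℕ∞) < m → iteratedDeriv l g z = 0) (k : ℕ) (w : ℂ) :
    (1 - k * (1 / (m.toNat : ℝ))) * (analyticOrderNatAt g w : ℝ) ≤
      ((analyticOrderNatAt g w - k : ℕ) : ℝ) := by
  have hga : ∀ z, AnalyticAt ℂ g z := fun z => hg.analyticAt z
  have hfin := entire_ord_ne_top hga hx w
  by_cases hw : g w = 0
  swap
  · have h4 : analyticOrderAt g w = 0 := by
      by_contra h
      rw [← ne_eq, (hga w).analyticOrderAt_ne_zero] at h
      exact hw h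
    simp [analyticOrderNatAt, h4]
  have hle : ∀ p : ℕ, (p : ℕ∞) ≤ m → p ≤ analyticOrderNatAt g w := by
    intro p hp
    have h1 : (p : ℕ∞) ≤ analyticOrderAt g w := by
      rw [natCast_le_analyticOrderAt_iff_iteratedDeriv_eq_zero (hga w)]
      intro i hi
      exact hint w hw i (lt_of_lt_of_le (by exact_mod_cast hi) hp)
    rw [← Nat.cast_analyticOrderNatAt hfin] at h1
    exact_mod_cast h1
  set o := analyticOrderNatAt g w with ho
  have hmt : m ≠ ⊤ := by
    rintro rfl
    have := hle (o + 1) le_top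
    omega
  obtain ⟨p, rfl⟩ := ENat.ne_top_iff_exists.1 hmt
  have hp := hle p le_rfl
  have hp0 : 0 < p := Nat.pos_of_ne_zero (by simpa using hm)
  simp only [ENat.toNat_natCast]
  have hpo : (p : ℝ) ≤ o := by exact_mod_cast hp
  have hp0' : (0 : ℝ) < p := by exact_mod_cast hp0
  have h1 : (o : ℝ) - k ≤ ((o - k : ℕ) : ℝ) := by
    have : o ≤ (o - k) + k := by omega
    have h : (o : ℝ) ≤ ((o - k : ℕ) : ℝ) + k := by exact_mod_cast this
    linarith
  have h2 : (k : ℝ) ≤ k * (1 / (p : ℝ)) * o := by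
    have : 1 ≤ (1 / (p : ℝ)) * o := by
      rw [one_div, inv_mul_eq_div, one_le_div hp0']; exact hpo
    rw [mul_assoc]
    exact le_mul_of_one_le_right (by positivity) this
  linarith

theorem core_zero {ι : Type*} [DecidableEq ι] [Fintype ι] {d n : ℕ} {b : ι → Fin d → ℂ}
    (hspan : ∀ A : Finset ι, A.card = n + 1 → Submodule.span ℂ (b '' (A : Set ι)) = ⊤)
    (hq : n + 1 ≤ Fintype.card ι) (hd : 2 ≤ d)
    {F : Fin d → ℂ → ℂ} (hF : ∀ l, Differentiable ℂ (F l))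
    (hnz : ∀ z, ∃ l, F l z ≠ 0) (hli : LinearIndependent ℂ F)
    (hW0 : wron F 0 ≠ 0) (hg0 : ∀ j, ∑ l, b j l * F l 0 ≠ 0)
    {m : ι → ℕ∞} (hm : ∀ j, m j ≠ 0)
    (hint : ∀ j z, (∑ l, b j l * F l z) = 0 → ∀ i : ℕ, (i : ℕ∞) < m j →
      iteratedDeriv i (fun w => ∑ l, b j l * F l w) z = 0)
    (har : (2 * n : ℝ) - d + 2 < Fintype.card ι - ((d - 1 : ℕ) : ℝ) * ∑ j, 1 / ((m j).toNat : ℝ)) :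
    False := by
  obtain ⟨ω, θ, hθ, hω, hωθ, hωs, hN⟩ := nochka_final b hspan (by omega) hq
  set τ : ι → ℝ := fun j => ω j * (1 - ((d - 1 : ℕ) : ℝ) * (1 / ((m j).toNat : ℝ))) with hτ
  have hτω : ∀ j, τ j ≤ ω j := by
    intro j
    have : 0 ≤ ((d - 1 : ℕ) : ℝ) * (1 / ((m j).toNat : ℝ)) := by positivity
    simp only [hτ]
    nlinarith [hω j]
  have dg : ∀ j, Differentiable ℂ (fun z => ∑ l, b j l * F l z) := fun j => by fun_prop
  have hord := fun w => order_ineq hspan hq hF hnz (τ := τ) hN hW0 (fun j => ⟨0, hg0 j⟩) w (by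
    intro j
    have h := mult_ineq (dg j) (hg0 j) (hm j) (hint j) (d - 1) w
    simp only [hτ]
    rw [mul_assoc]
    exact mul_le_mul_of_nonneg_left h (hω j))
  obtain ⟨K, C', hK, hmain⟩ := main_ineq hspan hq (by omega) hF hnz hω hτω hN hW0 hg0 hord
  obtain ⟨C, hlow⟩ := charT_low hF hnz hd hli
  have hγ : 0 < ∑ j, τ j - d := by
    have h1 : ∑ j, τ j = ∑ j, ω j - ((d - 1 : ℕ) : ℝ) * ∑ j, ω j * (1 / ((m j).toNat : ℝ)) := by
      rw [Finset.mul_sum, ← Finset.sum_sub_distrib]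
      exact Finset.sum_congr rfl fun j _ => by simp only [hτ]; ring
    have h2 : ∑ j, ω j * (1 / ((m j).toNat : ℝ)) ≤ θ * ∑ j, 1 / ((m j).toNat : ℝ) := by
      rw [Finset.mul_sum]
      exact Finset.sum_le_sum fun j _ => mul_le_mul_of_nonneg_right (hωθ j) (by positivity)
    have h3 : ((d - 1 : ℕ) : ℝ) * ∑ j, ω j * (1 / ((m j).toNat : ℝ)) ≤
        ((d - 1 : ℕ) : ℝ) * (θ * ∑ j, 1 / ((m j).toNat : ℝ)) :=
      mul_le_mul_of_nonneg_left h2 (by positivity)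
    rw [h1, hωs]
    nlinarith
  exact growth_contra (charT F) (charT_bdd hF hnz) hlow hγ hK hmain

theorem core_any {ι : Type*} [DecidableEq ι] [Fintype ι] {d n : ℕ} {b : ι → Fin d → ℂ}
    (hspan : ∀ A : Finset ι, A.card = n + 1 → Submodule.span ℂ (b '' (A : Set ι)) = ⊤)
    (hq : n + 1 ≤ Fintype.card ι) (hd : 2 ≤ d)
    {F : Fin d → ℂ → ℂ} (hF : ∀ l, Differentiable ℂ (F l))
    (hnz : ∀ z, ∃ l, F l z ≠ 0) (hli : LinearIndependent ℂ F) (hb : ∀ j, b j ≠ 0)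
    {m : ι → ℕ∞} (hm : ∀ j, m j ≠ 0)
    (hint : ∀ j z, (∑ l, b j l * F l z) = 0 → ∀ i : ℕ, (i : ℕ∞) < m j →
      iteratedDeriv i (fun w => ∑ l, b j l * F l w) z = 0)
    (har : (2 * n : ℝ) - d + 2 < Fintype.card ι - ((d - 1 : ℕ) : ℝ) * ∑ j, 1 / ((m j).toNat : ℝ)) :
    False := by
  have hgx : ∀ j, ∃ x, ∑ l, b j l * F l x ≠ 0 := by
    intro j
    by_contra hcon
    push Not at hcon
    apply hb j
    funext l
    refine Fintype.linearIndependent_iff.1 hli (b j) ?_ l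
    funext z
    simpa using hcon z
  obtain ⟨x, hx⟩ := wron_ne_zero hF hli
  have e1 := entire_ne_near (fun z => wron_analyticAt fun i => (hF i).analyticAt z) hx
  have e2 : ∀ᶠ z in nhdsWithin (0 : ℂ) {0}ᶜ, ∀ j, ∑ l, b j l * F l z ≠ 0 :=
    Filter.eventually_all.2 fun j => by
      obtain ⟨y, hy⟩ := hgx j
      have dg : Differentiable ℂ (fun z => ∑ l, b j l * F l z) := by fun_prop
      exact entire_ne_near (fun z => dg.analyticAt z) hy
  obtain ⟨c, hc1, hc2⟩ := (e1.and e2).exists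
  refine core_zero (b := b) (F := fun l z => F l (z + c)) (m := m) hspan hq hd
    (fun l => (hF l).comp (by fun_prop)) (fun z => hnz (z + c)) ?_ ?_ ?_ hm ?_ har
  · rw [Fintype.linearIndependent_iff] at hli ⊢
    intro v hv
    apply hli v
    funext z
    have := congrFun hv (z - c)
    simpa using this
  · have : wron (fun l z => F l (z + c)) 0 = wron F c := by
      unfold wron
      congr 1
      ext i l
      simp [iteratedDeriv_comp_add_const]
    rw [this]; exact hc1
  · intro j; simpa using hc2 j
  · intro j z hz i hi
    have h1 := hint j (z + c) hz i hi
    have h2 := congrFun (iteratedDeriv_comp_add_const i (fun w => ∑ l, b j l * F l w) c) z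
    rw [h2]; exact h1

theorem nochka_arith {N n k Q : ℕ} {S : ℝ} (hk : 1 ≤ k) (hkn : k ≤ n) (hnN : n ≤ N)
    (hQ : N + n + 1 ≤ Q) (h : (n : ℝ) + 1 < Q - N * S) :
    (2 * n : ℝ) - (k + 1 : ℕ) + 2 < Q - k * S := by
  have hk' : (1 : ℝ) ≤ k := by exact_mod_cast hk
  have hkn' : (k : ℝ) ≤ n := by exact_mod_cast hkn
  have hnN' : (n : ℝ) ≤ N := by exact_mod_cast hnN
  have hQ' : (N : ℝ) + n + 1 ≤ Q := by exact_mod_cast hQ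
  have hN : (0 : ℝ) < N := by linarith
  push_cast
  have h1 : k * (N * S) < k * (Q - n - 1) := by
    apply mul_lt_mul_of_pos_left _ (by linarith); linarith
  have h2 : (k : ℝ) * (Q - n - 1) ≤ N * (Q - 2 * n + k - 1) := by
    nlinarith [mul_nonneg (sub_nonneg.2 (hkn'.trans hnN')) (show (0 : ℝ) ≤ Q - n - 1 - N by linarith),
      mul_nonneg hN.le (sub_nonneg.2 hnN')]
  have h3 : N * (k * S) < N * (Q - 2 * n + k - 1) := by linarith
  have h4 := lt_of_mul_lt_mul_left h3 hN.le
  linarith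

theorem gen_span {N q : ℕ} {a : Fin q → Fin (N + 1) → ℂ}
    (hgen : ∀ e : Fin (N + 1) → Fin q, StrictMono e →
      Matrix.det (Matrix.of fun k i => a (e k) i) ≠ 0) (A : Finset (Fin q)) (hA : A.card = N + 1) :
    Submodule.span ℂ (a '' (A : Set (Fin q))) = ⊤ := by
  have h1 := hgen (A.orderEmbOfFin hA) (A.orderEmbOfFin hA).strictMono
  have h2 := Matrix.linearIndependent_rows_of_det_ne_zero h1
  have h3 := h2.span_eq_top_of_card_eq_finrank' (by simp)
  rw [eq_top_iff, ← h3]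
  apply Submodule.span_mono
  rintro _ ⟨k, rfl⟩
  exact ⟨A.orderEmbOfFin hA k, by simp, rfl⟩

theorem stmt_core (N q : ℕ) (hq : 2 * N + 1 ≤ q)
    (a : Fin q → Fin (N + 1) → ℂ)
    (hgen : ∀ e : Fin (N + 1) → Fin q, StrictMono e →
      Matrix.det (Matrix.of fun k i => a (e k) i) ≠ 0)
    (m : Fin q → ℕ∞) (hm : ∀ j, m j ≠ 0)
    (hsum : (N : ℝ) + 1 < ∑ j : Fin q, (1 - (N : ℝ) / ((m j).toNat : ℝ)))
    (ft : Fin (N + 1) → ℂ → ℂ)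
    (hint : ∀ j, ∀ z : ℂ, (∑ i : Fin (N + 1), a j i * ft i z) = 0 →
      ∀ l : ℕ, (l : ℕ∞) < m j →
        iteratedDeriv l (fun w => ∑ i : Fin (N + 1), a j i * ft i w) z = 0)
    {d : ℕ} (hd : 2 ≤ d) {F : Fin d → ℂ → ℂ} (hF : ∀ l, Differentiable ℂ (F l))
    (hnz : ∀ z, ∃ l, F l z ≠ 0) (hli : LinearIndependent ℂ F)
    (p : Fin d → Fin (N + 1)) (hp : ∀ l, F l = ft (p l))
    (c : Fin (N + 1) → Fin d → ℂ) (hc : ∀ i, ∑ l, c i l • F l = ft i) : False := by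
  classical
  let Φ : (Fin (N + 1) → ℂ) →ₗ[ℂ] (Fin d → ℂ) := Fintype.linearCombination ℂ c
  have hΦ : ∀ u l, Φ u l = ∑ i, u i * c i l := by
    intro u l
    simp [Φ, Fintype.linearCombination_apply]
  have hcp : ∀ l, c (p l) = Pi.single l 1 := by
    intro l
    have h1 : ∑ l', (c (p l) l' - (Pi.single l 1 : Fin d → ℂ) l') • F l' = 0 := by
      simp only [sub_smul, Finset.sum_sub_distrib, hc]
      rw [← hp l]
      simp [Pi.single_apply]
    funext l'
    exact sub_eq_zero.1 (Fintype.linearIndependent_iff.1 hli _ h1 l')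
  have hΦs : LinearMap.range Φ = ⊤ := by
    rw [LinearMap.range_eq_top]
    intro v
    refine ⟨∑ l, v l • Pi.single (p l) 1, ?_⟩
    have h2 : ∀ l, Φ (Pi.single (p l) 1) = Pi.single l 1 := by
      intro l
      rw [← hcp l]
      simp [Φ]
    simp only [map_sum, map_smul, h2]
    funext l
    simp [Finset.sum_apply, Pi.single_apply]
  set b : Fin q → Fin d → ℂ := fun j => Φ (a j) with hb
  have hgb : ∀ j z, ∑ l, b j l * F l z = ∑ i, a j i * ft i z := by
    intro j z
    simp only [hb, hΦ, Finset.sum_mul]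
    rw [Finset.sum_comm]
    apply Finset.sum_congr rfl
    intro i _
    rw [← hc i]
    simp [Finset.mul_sum, mul_assoc]
  have hbspan : ∀ A : Finset (Fin q), A.card = N + 1 →
      Submodule.span ℂ (b '' (A : Set (Fin q))) = ⊤ := by
    intro A hA
    have h1 : b '' (A : Set (Fin q)) = Φ '' (a '' (A : Set (Fin q))) := by
      rw [Set.image_image]
    rw [h1, Submodule.span_image, gen_span hgen A hA, Submodule.map_top, hΦs]
  set Z : Finset (Fin q) := Finset.univ.filter fun j => b j = 0 with hZ
  have hbot : (⊥ : Submodule ℂ (Fin d → ℂ)) ≠ ⊤ := by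
    haveI : Nonempty (Fin d) := ⟨⟨0, by omega⟩⟩
    exact bot_ne_top
  have hZN : Z.card ≤ N := by
    by_contra hcon
    obtain ⟨A, hAZ, hA⟩ := Finset.exists_subset_card_eq (show N + 1 ≤ Z.card by omega)
    apply hbot
    rw [← hbspan A hA, eq_comm, Submodule.span_eq_bot]
    rintro _ ⟨j, hj, rfl⟩
    have := hAZ hj
    simpa [hZ] using this
  obtain ⟨n, hn⟩ : ∃ n, N = n + Z.card := ⟨N - Z.card, by omega⟩
  have hcard : Fintype.card {j // b j ≠ 0} + Z.card = q := by
    rw [Fintype.card_subtype, hZ, add_comm]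
    have := Finset.card_filter_add_card_filter_not (s := (Finset.univ : Finset (Fin q)))
      (fun j => b j = 0)
    simpa using this
  have hspan : ∀ A : Finset {j // b j ≠ 0}, A.card = n + 1 →
      Submodule.span ℂ ((fun j : {j // b j ≠ 0} => b j) '' (A : Set {j // b j ≠ 0})) = ⊤ := by
    intro A hA
    have hdis : Disjoint (A.map (Function.Embedding.subtype _)) Z := by
      rw [Finset.disjoint_left]
      intro j hj hjZ
      simp only [Finset.mem_map, Function.Embedding.subtype_apply] at hj
      obtain ⟨j', -, rfl⟩ := hj
      simp only [hZ, Finset.mem_filter] at hjZ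
      exact j'.2 hjZ.2
    have h1 := hbspan (A.map (Function.Embedding.subtype _) ∪ Z) (by
      rw [Finset.card_union_of_disjoint hdis, Finset.card_map, hA]; omega)
    rw [eq_top_iff, ← h1, Submodule.span_le]
    rintro _ ⟨j, hj, rfl⟩
    by_cases hbj : b j = 0
    · rw [hbj]; exact Submodule.zero_mem _
    · apply Submodule.subset_span
      simp only [Finset.coe_union, Set.mem_union, Finset.mem_coe, Finset.mem_map] at hj
      rcases hj with ⟨j', hj', rfl⟩ | hj
      · exact ⟨j', hj', rfl⟩
      · simp only [hZ, Finset.mem_filter] at hj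
        exact absurd hj.2 hbj
  have hq' : n + 1 ≤ Fintype.card {j // b j ≠ 0} := by omega
  -- the dimension is at most `n + 1`
  have hdn : d ≤ n + 1 := by
    obtain ⟨A, -, hA⟩ := Finset.exists_subset_card_eq
      (show n + 1 ≤ (Finset.univ : Finset {j // b j ≠ 0}).card by simpa using hq')
    have h1 := hspan A hA
    have h2 := finrank_span_le_card (R := ℂ)
      ((fun j : {j // b j ≠ 0} => b j) '' (A : Set {j // b j ≠ 0}))
    rw [h1, finrank_top, Module.finrank_fin_fun] at h2
    refine h2.trans ?_
    rw [← Set.ncard_eq_toFinset_card']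
    refine (Set.ncard_image_le A.finite_toSet).trans ?_
    rw [Set.ncard_coe_finset, hA]
  obtain ⟨k, rfl⟩ : ∃ k, d = k + 1 := ⟨d - 1, by omega⟩
  refine core_any (b := fun j : {j // b j ≠ 0} => b j) (n := n) (m := fun j => m j) hspan hq' hd hF hnz hli
    (fun j => j.2) (fun j => hm j) ?_ ?_
  · intro j z hz i hi
    have h1 : (fun w => ∑ l, b j l * F l w) = fun w => ∑ i, a j i * ft i w := funext (hgb j)
    rw [h1]
    exact hint j z (by rw [← hgb]; exact hz) i hi
  · rw [Nat.add_sub_cancel]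
    refine nochka_arith (N := N) (by omega) (by omega) (by omega) (by omega) ?_
    have h1 : ∑ j : Fin q, (1 - (N : ℝ) / ((m j).toNat : ℝ)) =
        ∑ j ∈ Z, (1 - (N : ℝ) / ((m j).toNat : ℝ)) +
        ∑ j : {j // b j ≠ 0}, (1 - (N : ℝ) / ((m j).toNat : ℝ)) := by
      rw [← Finset.sum_filter_add_sum_filter_not Finset.univ (fun j => b j = 0)]
      congr 1
      exact (Finset.sum_subtype (p := fun j => b j ≠ 0) _ (by simp)
        (fun j => (1 - (N : ℝ) / ((m j).toNat : ℝ))))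
    have h2 : ∑ j ∈ Z, (1 - (N : ℝ) / ((m j).toNat : ℝ)) ≤ Z.card := by
      calc _ ≤ ∑ j ∈ Z, (1 : ℝ) := Finset.sum_le_sum fun j _ => by
            have : 0 ≤ (N : ℝ) / ((m j).toNat : ℝ) := by positivity
            linarith
        _ = _ := by simp
    have h3 : ∑ j : {j // b j ≠ 0}, (1 - (N : ℝ) / ((m j).toNat : ℝ)) =
        Fintype.card {j // b j ≠ 0} - N * ∑ j : {j // b j ≠ 0}, 1 / ((m j).toNat : ℝ) := by
      rw [Finset.sum_sub_distrib, Finset.mul_sum]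
      simp [div_eq_mul_inv]
    have h4 : (N : ℝ) = n + Z.card := by exact_mod_cast hn
    rw [← h3]
    linarith
theorem stmt13 (N q : ℕ) (hq : 2 * N + 1 ≤ q)
    (a : Fin q → Fin (N + 1) → ℂ)
    (hgen : ∀ e : Fin (N + 1) → Fin q, StrictMono e →
      Matrix.det (Matrix.of fun k i => a (e k) i) ≠ 0)
    (m : Fin q → ℕ∞) (hm : ∀ j, m j ≠ 0)
    (hsum : (N : ℝ) + 1 < ∑ j : Fin q, (1 - (N : ℝ) / ((m j).toNat : ℝ)))
    (ft : Fin (N + 1) → ℂ → ℂ)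
    (hft : ∀ i, Differentiable ℂ (ft i))
    (hnz : ∀ z : ℂ, ∃ i, ft i z ≠ 0)
    (hint : ∀ j, ∀ z : ℂ, (∑ i : Fin (N + 1), a j i * ft i z) = 0 →
      ∀ l : ℕ, (l : ℕ∞) < m j →
        iteratedDeriv l (fun w => ∑ i : Fin (N + 1), a j i * ft i w) z = 0) :
    ∀ z w : ℂ, ∃ c : ℂ, c ≠ 0 ∧ ∀ i, ft i z = c * ft i w := by
  obtain ⟨κ, p, hpinj, hspan, hli⟩ := exists_linearIndependent' ℂ ft
  haveI : Finite κ := Finite.of_injective p hpinj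
  haveI := Fintype.ofFinite κ
  let E := Fintype.equivFin κ
  set d := Fintype.card κ with hd
  set F : Fin d → ℂ → ℂ := fun l => ft (p (E.symm l)) with hFdef
  have hli' : LinearIndependent ℂ F := hli.comp _ E.symm.injective
  have hr : Set.range F = Set.range (ft ∘ p) := by
    rw [← E.symm.surjective.range_comp (ft ∘ p)]; rfl
  have hmem : ∀ i, ∃ c : Fin d → ℂ, ∑ l, c l • F l = ft i := by
    intro i
    rw [← Submodule.mem_span_range_iff_exists_fun, hr, hspan]
    exact Submodule.subset_span ⟨i, rfl⟩
  choose c hc using hmem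
  have hcz : ∀ i z, ft i z = ∑ l, c i l * F l z := by
    intro i z
    rw [← hc i]; simp
  have hnzF : ∀ z, ∃ l, F l z ≠ 0 := by
    intro z
    by_contra hcon
    push Not at hcon
    obtain ⟨i, hi⟩ := hnz z
    apply hi
    rw [hcz]; simp [hcon]
  by_cases hd2 : 2 ≤ d
  · exact (stmt_core N q hq a hgen m hm hsum ft hint hd2 (fun l => hft _) hnzF hli'
      (fun l => p (E.symm l)) (fun l => rfl) c hc).elim
  · obtain ⟨l0, -⟩ := hnzF 0
    have hu : ∀ l : Fin d, l = l0 := fun l => by ext; omega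
    have hF0 : ∀ z, F l0 z ≠ 0 := by
      intro z
      obtain ⟨l, hl⟩ := hnzF z
      rwa [hu l] at hl
    have hs : ∀ i z, ft i z = c i l0 * F l0 z := by
      intro i z
      rw [hcz]
      exact Finset.sum_eq_single_of_mem l0 (Finset.mem_univ _) fun l _ h => absurd (hu l) h
    intro z w
    refine ⟨F l0 z / F l0 w, div_ne_zero (hF0 z) (hF0 w), fun i => ?_⟩
    rw [hs i z, hs i w]
    have := hF0 w
    field_simp
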